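/- arXiv:2310.02244 — 2 statements merged into one kernel-verified Lean document; each statement's English description precedes it below -/
import Mathlib

section
/- With Γ^L and C^L as defined in the context, there exist a constant c > 0 and an integer k₀ such that for every L = 2^k with k ≥ k₀, every 0 ≤ t ≤ T−1, every −1 ≤ r ≤ t, every a, b ∈ {0,1}, every p ∈ [0,1] (p ∈ (0,1] for C) and every q ∈ (0,1]: |Γ^L_{t,r,a,b}(p,q)| ≤ c and |C^L_{t,r,a}(p)| ≤ c. Equivalently, the unnormalized coefficients 𝚪 = Γ^L/√L (the derivatives of each ket with respect to each Gaussian base variable) are O(1/√L) and all covariances between kets are O(1), uniformly in L. -/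
open MeasureTheory Set Finset Filter Topology

/-- The defining recursion (from the Tensor-Program analysis of a depth-`L` linear residual
network `x^l = x^{l−1} + L^{−1/2} W^l x^{l−1}` trained for `T` SGD steps under Depth-μP)
for the coefficient functions `Γ^L_{t,r,a,b}(p,q)` and covariance functions `C^L_{t,s,a}(p)`,
together with the output values `f̊_t` and loss derivatives `χ̊_t = ℓ'_t(f̊_t)`.

Conventions: Booleans encode the indices `a, b ∈ {0,1}` (`false = 0`, `true = 1`); the
time index `r, s = −1` refers to the input/output layers `U, V`; `C_{−1,−1,·} ≡ 1`;
`C_{t,s,·} ≡ 0` if exactly one of `t, s` is `−1`; `C` is symmetric; `Γ_{s,r,·,·} ≡ 0` for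
`r > s`; `Γ^L` is constant in `p` on each interval `((l−1)/L, l/L]`. -/
structure IsLinearTP (T L : ℕ) (ξ : ℕ → ℝ) (ℓ' : ℕ → ℝ → ℝ)
    (Γ : ℕ → ℤ → Bool → Bool → ℝ → ℝ → ℝ)
    (C : ℤ → ℤ → Bool → ℝ → ℝ)
    (f χ : ℕ → ℝ) : Prop where
  C_symm : ∀ (t s : ℤ) (b : Bool) (p : ℝ), C t s b p = C s t b p
  C_base : ∀ (b : Bool) (p : ℝ), C (-1) (-1) b p = 1
  C_mixed : ∀ t : ℤ, 0 ≤ t → ∀ (b : Bool) (p : ℝ), C t (-1) b p = 0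
  Γ_vanish : ∀ (t : ℕ) (r : ℤ), (t : ℤ) < r → ∀ (a b : Bool) (p q : ℝ), Γ t r a b p q = 0
  Γ_const : ∀ t : ℕ, t < T → ∀ r : ℤ, -1 ≤ r → r ≤ (t : ℤ) → ∀ a b : Bool,
    ∀ l : ℕ, 1 ≤ l → l ≤ L → ∀ p q : ℝ, ((l : ℝ) - 1) / L < p → p ≤ (l : ℝ) / L →
      0 < q → q ≤ 1 → Γ t r a b p q = Γ t r a b ((l : ℝ) / L) q
  fwd_init : ∀ t : ℕ, t < T → ∀ r : ℤ, -1 ≤ r → r ≤ (t : ℤ) → ∀ b : Bool,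
    ∀ q : ℝ, 0 < q → q ≤ 1 →
      Γ t r false b 0 q = if r = -1 ∧ b = false then ξ t else 0
  fwd_step : ∀ t : ℕ, t < T → ∀ l : ℕ, 1 ≤ l → l ≤ L → ∀ r : ℤ, -1 ≤ r → r ≤ (t : ℤ) →
    ∀ b : Bool, ∀ p q : ℝ, ((l : ℝ) - 1) / L < p → p ≤ (l : ℝ) / L → 0 < q → q ≤ 1 →
      Γ t r false b p q =
        Γ t r false b (((l : ℝ) - 1) / L) q
          + (if (t : ℤ) = r ∧ b = false ∧ (l : ℤ) = ⌈(L : ℝ) * q⌉ then 1 else 0)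
          + (1 / (L : ℝ)) * ∑ s ∈ Finset.range t,
              Γ s r true b ((l : ℝ) / L) q *
                (Γ t (s : ℤ) false true (((l : ℝ) - 1) / L) ((l : ℝ) / L)
                  - C (t : ℤ) (s : ℤ) false ((l : ℝ) / L))
  fwd_C : ∀ t : ℕ, t < T → ∀ s : ℕ, s ≤ t → ∀ l : ℕ, 1 ≤ l → l ≤ L →
    ∀ p : ℝ, ((l : ℝ) - 1) / L < p → p ≤ (l : ℝ) / L →
      C (t : ℤ) (s : ℤ) false p =
        ∑ t' ∈ Finset.Icc (-1 : ℤ) (t : ℤ), ∑ s' ∈ Finset.Icc (-1 : ℤ) (s : ℤ), ∑ b : Bool,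
          ∫ q in Ioc (0 : ℝ) 1,
            Γ t t' false b (((l : ℝ) - 1) / L) q * C t' s' b q *
              Γ s s' false b (((l : ℝ) - 1) / L) q
  f_def : ∀ t : ℕ, t < T → f t = Γ t (-1) false true 1 1
  χ_def : ∀ t : ℕ, t < T → χ t = ℓ' t (f t)
  bwd_init : ∀ t : ℕ, t < T → ∀ r : ℤ, -1 ≤ r → r ≤ (t : ℤ) → ∀ b : Bool,
    ∀ q : ℝ, 0 < q → q ≤ 1 →
      Γ t r true b 1 q = if r = -1 ∧ b = true then χ t else 0
  bwd_step : ∀ t : ℕ, t < T → ∀ l : ℕ, 1 ≤ l → l ≤ L → ∀ r : ℤ, -1 ≤ r → r ≤ (t : ℤ) →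
    ∀ b : Bool, ∀ p q : ℝ, ((l : ℝ) - 2) / L < p → p ≤ ((l : ℝ) - 1) / L → 0 ≤ p →
      0 < q → q ≤ 1 →
      Γ t r true b p q =
        Γ t r true b ((l : ℝ) / L) q
          + (if (t : ℤ) = r ∧ b = true ∧ (l : ℤ) = ⌈(L : ℝ) * q⌉ then 1 else 0)
          + (1 / (L : ℝ)) * ∑ s ∈ Finset.range t,
              Γ s r false b (((l : ℝ) - 1) / L) q *
                (Γ t (s : ℤ) true false ((l : ℝ) / L) ((l : ℝ) / L)
                  - C (t : ℤ) (s : ℤ) true ((l : ℝ) / L))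
  bwd_C : ∀ t : ℕ, t < T → ∀ s : ℕ, s ≤ t → ∀ l : ℕ, 1 ≤ l → l ≤ L →
    ∀ p : ℝ, ((l : ℝ) - 1) / L < p → p ≤ (l : ℝ) / L →
      C (t : ℤ) (s : ℤ) true p =
        ∑ t' ∈ Finset.Icc (-1 : ℤ) (t : ℤ), ∑ s' ∈ Finset.Icc (-1 : ℤ) (s : ℤ), ∑ b : Bool,
          ∫ q in Ioc (0 : ℝ) 1,
            Γ t t' true b ((l : ℝ) / L) q * C t' s' b q * Γ s s' true b ((l : ℝ) / L) q


/-- core discrete Gronwall -/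
lemma core_gronwall {ι κ : Type*} (L : ℕ) (hL : 1 ≤ L) (K A : ℝ) (hK : 1 ≤ K) (hA : 0 ≤ A)
    (G : ℕ → ι → ℝ) (D : ℕ → κ → ℝ)
    (h0 : ∀ i, |G 0 i| ≤ A)
    (hstep : ∀ j < L, ∀ M N : ℝ, 0 ≤ M → 0 ≤ N → (∀ i, |G j i| ≤ M) → (∀ k, |D j k| ≤ N) →
      ∀ i, |G (j+1) i| ≤ M + (K / L) * (M + N))
    (hD : ∀ j < L, ∀ M N : ℝ, 0 ≤ M → 0 ≤ N → (∀ i, |G j i| ≤ M) →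
      (∀ j' < j, ∀ k, |D j' k| ≤ N * Real.exp ((2*K^2+2*K) * (j' / L))) →
      ∀ k, |D j k| ≤ K * (M + N * Real.exp ((2*K^2+2*K) * (j / L)) / (2*K^2+2*K))) :
    (∀ j ≤ L, ∀ i, |G j i| ≤ A * Real.exp (2*K^2+2*K)) ∧
    (∀ j < L, ∀ k, |D j k| ≤ 2*K*A * Real.exp (2*K^2+2*K)) := by
  have hLpos : (0:ℝ) < L := by exact_mod_cast hL
  set lam : ℝ := 2*K^2+2*K with hlam
  have hlam0 : 0 < lam := by positivity
  have main : ∀ j : ℕ, j ≤ L → (∀ i, |G j i| ≤ A * Real.exp (lam * (j / L))) ∧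
      (∀ j' < j, ∀ k, |D j' k| ≤ 2*K*A * Real.exp (lam * (j' / L))) := by
    intro j
    induction j with
    | zero => intro _; simpa using h0
    | succ j ih =>
      intro hj
      obtain ⟨ihG, ihD⟩ := ih (by omega)
      set e := Real.exp (lam * (j / L)) with he
      have hepos : 0 < e := Real.exp_pos _
      have hDj : ∀ k, |D j k| ≤ 2*K*A * e := by
        intro k
        refine (hD j (by omega) (A * e) (2*K*A) (by positivity) (by positivity) ihG ihD k).trans ?_
        rw [← he]
        have h1 : 2*K*A*e/lam ≤ A * e := by
          rw [div_le_iff₀ hlam0]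
          have : 0 ≤ A * e := by positivity
          nlinarith [mul_nonneg this (sq_nonneg K)]
        nlinarith
      refine ⟨?_, ?_⟩
      · intro i
        refine (hstep j (by omega) (A*e) (2*K*A*e) (by positivity) (by positivity) ihG hDj i).trans ?_
        have h2 : Real.exp (lam * ((j+1:ℕ) / L)) = e * Real.exp (lam / L) := by
          rw [he, ← Real.exp_add]; congr 1; push_cast; field_simp
        rw [h2]
        have h3 : 1 + lam / L ≤ Real.exp (lam / L) := by
          have := Real.add_one_le_exp (lam / L); linarith
        have h4 : A*e*(1 + lam / L) ≤ A*e*Real.exp (lam / L) := by gcongr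
        have h5 : A * e + K / L * (A * e + 2 * K * A * e) ≤ A*e*(1 + lam / L) := by
          have : A*e*(1 + lam / L) - (A * e + K / L * (A * e + 2 * K * A * e)) = A*e*K/L := by
            rw [hlam]; field_simp; ring
          have h6 : 0 ≤ A*e*K/L := by positivity
          linarith
        linarith
      · intro j' hj' k
        rcases Nat.lt_succ_iff_lt_or_eq.mp hj' with h | h
        · exact ihD j' h k
        · subst h; exact hDj k
  have hexp : ∀ j : ℕ, j ≤ L → Real.exp (lam * (j / L)) ≤ Real.exp lam := by
    intro j hj
    apply Real.exp_le_exp.mpr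
    have : (j:ℝ) / L ≤ 1 := by
      rw [div_le_one hLpos]; exact_mod_cast hj
    nlinarith
  refine ⟨fun j hj i => ((main j hj).1 i).trans ?_, fun j hj k => ((main L le_rfl).2 j hj k).trans ?_⟩
  · have := hexp j hj; gcongr
  · have := hexp j hj.le; gcongr

/-- position along the sweep -/
noncomputable def sweepU (a : Bool) (q : ℝ) : ℝ := if a then 1 - q else q

noncomputable def sweepP (L : ℕ) (a : Bool) (j : ℕ) : ℝ := if a then ((L : ℝ) - j) / L else j / L

noncomputable def sweepL (L : ℕ) (a : Bool) (j : ℕ) : ℕ := if a then L - j else j + 1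

lemma int_bound_fwd (f : ℝ → ℝ) (M N lam x : ℝ) (hN : 0 ≤ N) (hlam : 0 < lam)
    (hx : 0 ≤ x) (hx1 : x ≤ 1)
    (h : ∀ q ∈ Ioo (0:ℝ) 1, |f q| ≤ M + (if q ≤ x then N * Real.exp (lam * q) else 0)) :
    |∫ q in Ioc (0:ℝ) 1, f q| ≤ M + N * Real.exp (lam * x) / lam := by
  rw [integral_Ioc_eq_integral_Ioo]
  have hint : IntegrableOn (fun q => N * Real.exp (lam * q)) (Ioc 0 x) := by
    apply Continuous.integrableOn_Ioc; fun_prop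
  have hint2 : Integrable ((Ioc 0 x).indicator (fun q => N * Real.exp (lam * q))) := by
    rw [integrable_indicator_iff measurableSet_Ioc]; exact hint
  have hM : IntegrableOn (fun _ : ℝ => M) (Ioo 0 1) := by
    simp
  have h1 : ‖∫ q in Ioo (0:ℝ) 1, f q‖ ≤
      ∫ q in Ioo (0:ℝ) 1, (M + (Ioc 0 x).indicator (fun q => N * Real.exp (lam * q)) q) := by
    apply norm_integral_le_of_norm_le
    · exact hM.add hint2.integrableOn
    · filter_upwards [ae_restrict_mem measurableSet_Ioo] with q hq
      refine (h q hq).trans ?_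
      by_cases hqx : q ≤ x
      · simp [hqx, Set.indicator, hq.1]
      · simp [hqx, Set.indicator]
  rw [integral_add hM hint2.integrableOn, ← integral_Ioc_eq_integral_Ioo,
    ← integral_Ioc_eq_integral_Ioo, ← integral_Ioc_eq_integral_Ioo,
    setIntegral_indicator measurableSet_Ioc] at h1
  have h2 : Ioc (0:ℝ) 1 ∩ Ioc 0 x = Ioc 0 x := by
    ext y; simp only [Set.mem_inter_iff, Set.mem_Ioc]
    constructor
    · exact fun h => h.2
    · exact fun h => ⟨⟨h.1, h.2.trans hx1⟩, h⟩
  rw [h2, ← intervalIntegral.integral_of_le hx, intervalIntegral.integral_const_mul,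
    intervalIntegral.integral_comp_mul_left (fun y => Real.exp y) hlam.ne', integral_exp] at h1
  rw [Real.norm_eq_abs, integral_Ioc_eq_integral_Ioo] at h1
  refine h1.trans ?_
  have h3 : N * (lam⁻¹ • (Real.exp (lam * x) - Real.exp (lam * 0))) ≤ N * Real.exp (lam * x) / lam := by
    rw [mul_div_assoc, smul_eq_mul, div_eq_inv_mul]
    gcongr
    have := Real.exp_pos (lam * 0)
    linarith
  simp only [integral_const, smul_eq_mul] at h1 ⊢
  simp at h3 ⊢
  linarith

lemma int_bound (a : Bool) (f : ℝ → ℝ) (M N lam x : ℝ) (hN : 0 ≤ N) (hlam : 0 < lam)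
    (hx : 0 ≤ x) (hx1 : x ≤ 1)
    (h : ∀ q ∈ Ioo (0:ℝ) 1, |f q| ≤ M +
      (if sweepU a q ≤ x then N * Real.exp (lam * sweepU a q) else 0)) :
    |∫ q in Ioc (0:ℝ) 1, f q| ≤ M + N * Real.exp (lam * x) / lam := by
  cases a with
  | false =>
    simp only [sweepU] at h
    exact int_bound_fwd f M N lam x hN hlam hx hx1 (by simpa using h)
  | true =>
    have e : ∫ q in Ioc (0:ℝ) 1, f q = ∫ q in Ioc (0:ℝ) 1, f (1 - q) := by
      rw [← intervalIntegral.integral_of_le zero_le_one,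
        ← intervalIntegral.integral_of_le zero_le_one, intervalIntegral.integral_comp_sub_left]
      simp
    rw [e]
    apply int_bound_fwd _ M N lam x hN hlam hx hx1
    intro q hq
    have := h (1 - q) ⟨by linarith [hq.2], by linarith [hq.1]⟩
    simpa [sweepU] using this

section Sweep
variable {T L : ℕ} {ξ : ℕ → ℝ} {ℓ' : ℕ → ℝ → ℝ}
    {Γ : ℕ → ℤ → Bool → Bool → ℝ → ℝ → ℝ}
    {C : ℤ → ℤ → Bool → ℝ → ℝ}
    {f χ : ℕ → ℝ}

lemma sweepL_mem (a : Bool) {j : ℕ} (hj : j < L) : 1 ≤ sweepL L a j ∧ sweepL L a j ≤ L := by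
  cases a <;> simp [sweepL] <;> omega

lemma sweepL_inj (a : Bool) {j j' : ℕ} (hj : j < L) (hj' : j' < L)
    (h : sweepL L a j = sweepL L a j') : j = j' := by
  cases a <;> simp [sweepL] at h <;> omega

lemma sweepP_mem (hL : 1 ≤ L) (a : Bool) {j : ℕ} (hj : j ≤ L) :
    0 ≤ sweepP L a j ∧ sweepP L a j ≤ 1 := by
  have hLpos : (0:ℝ) < L := by exact_mod_cast hL
  have hj' : (j:ℝ) ≤ L := by exact_mod_cast hj
  have hj0 : (0:ℝ) ≤ j := by positivity
  cases a
  · simp only [sweepP, Bool.false_eq_true, if_false]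
    exact ⟨by positivity, by rw [div_le_one hLpos]; exact hj'⟩
  · simp only [sweepP, if_true]
    exact ⟨div_nonneg (by linarith) hLpos.le, by rw [div_le_one hLpos]; linarith⟩

lemma sweep_cover (hL : 1 ≤ L) (a : Bool) {j j' : ℕ} (hj : j ≤ L) (hj' : j' < j) {q : ℝ}
    (h : (sweepL L a j' : ℤ) = ⌈(L:ℝ) * q⌉) :
    ((sweepL L a j' : ℝ) - 1) / L < q ∧ q ≤ (sweepL L a j' : ℝ) / L ∧
      (j':ℝ) / L ≤ sweepU a q ∧ sweepU a q ≤ j / L := by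
  have hLpos : (0:ℝ) < L := by exact_mod_cast hL
  have h1 := (Int.ceil_eq_iff.mp h.symm)
  have h2 : ((sweepL L a j' : ℝ) - 1) < L * q := by exact_mod_cast h1.1
  have h3 : L * q ≤ (sweepL L a j' : ℝ) := by exact_mod_cast h1.2
  have hjr : (j':ℝ) + 1 ≤ j := by exact_mod_cast hj'
  refine ⟨?_, ?_, ?_, ?_⟩
  · rw [div_lt_iff₀ hLpos]; linarith
  · rw [le_div_iff₀ hLpos]; linarith
  all_goals
    cases a
    · simp only [sweepL, sweepU, Bool.false_eq_true, if_false] at h2 h3 ⊢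
      push_cast at h2 h3
      first
        | rw [div_le_iff₀ hLpos]; linarith
        | rw [le_div_iff₀ hLpos]; linarith
    · simp only [sweepL, sweepU, if_true] at h2 h3 ⊢
      rw [Nat.cast_sub (by omega)] at h2 h3
      first
        | rw [div_le_iff₀ hLpos]; linarith
        | rw [le_div_iff₀ hLpos]; linarith

lemma sweepP_surj (a : Bool) {m : ℕ} (hm : m ≤ L) :
    ∃ j ≤ L, sweepP L a j = (m:ℝ) / L := by
  cases a
  · exact ⟨m, hm, by simp [sweepP]⟩
  · refine ⟨L - m, by omega, ?_⟩
    simp [sweepP, Nat.cast_sub hm]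

lemma sweepL_surj (a : Bool) {l : ℕ} (hl : 1 ≤ l) (hl' : l ≤ L) :
    ∃ j < L, sweepL L a j = l := by
  cases a
  · exact ⟨l - 1, by omega, by simp [sweepL]; omega⟩
  · exact ⟨L - l, by omega, by simp [sweepL]; omega⟩

lemma exists_cell (hL : 1 ≤ L) {p : ℝ} (hp : 0 < p) (hp1 : p ≤ 1) :
    ∃ l : ℕ, 1 ≤ l ∧ l ≤ L ∧ ((l:ℝ) - 1) / L < p ∧ p ≤ (l:ℝ) / L := by
  have hLpos : (0:ℝ) < L := by exact_mod_cast hL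
  refine ⟨⌈(L:ℝ) * p⌉₊, ?_, ?_, ?_, ?_⟩
  · exact Nat.one_le_iff_ne_zero.mpr (by
      rw [Ne, Nat.ceil_eq_zero, not_le]; positivity)
  · rw [Nat.ceil_le]; nlinarith
  · rw [div_lt_iff₀ hLpos]
    have := Nat.ceil_lt_add_one (a := (L:ℝ) * p) (by positivity)
    linarith
  · rw [le_div_iff₀ hLpos]
    have := Nat.le_ceil ((L:ℝ) * p)
    linarith

lemma sweep_init (hL : 1 ≤ L) (H : IsLinearTP T L ξ ℓ' Γ C f χ) (a : Bool) {t : ℕ} (ht : t < T)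
    (r : ℤ) (hr : -1 ≤ r) (hrt : r ≤ t) (b : Bool) (q : ℝ) (hq : 0 < q) (hq1 : q ≤ 1) :
    Γ t r a b (sweepP L a 0) q = if r = -1 ∧ b = a then (if a then χ t else ξ t) else 0 := by
  have hLpos : (L:ℝ) ≠ 0 := by positivity
  cases a
  · have := H.fwd_init t ht r hr hrt b q hq hq1
    simpa [sweepP] using this
  · have := H.bwd_init t ht r hr hrt b q hq hq1
    simpa [sweepP, hLpos] using this

lemma sweep_step (hL : 1 ≤ L) (H : IsLinearTP T L ξ ℓ' Γ C f χ) (a : Bool) {t : ℕ} (ht : t < T)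
    {j : ℕ} (hj : j < L)
    (r : ℤ) (hr : -1 ≤ r) (hrt : r ≤ t) (b : Bool) (q : ℝ) (hq : 0 < q) (hq1 : q ≤ 1) :
    Γ t r a b (sweepP L a (j+1)) q =
      Γ t r a b (sweepP L a j) q
        + (if (t:ℤ) = r ∧ b = a ∧ (sweepL L a j : ℤ) = ⌈(L:ℝ) * q⌉ then 1 else 0)
        + (1 / (L:ℝ)) * ∑ s ∈ Finset.range t, Γ s r (!a) b (sweepP L a (j+1)) q *
            (Γ t (s:ℤ) a (!a) (sweepP L a j) ((sweepL L a j : ℝ) / L)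
              - C (t:ℤ) (s:ℤ) a ((sweepL L a j : ℝ) / L)) := by
  have hLpos : (0:ℝ) < L := by exact_mod_cast hL
  cases a
  · have := H.fwd_step t ht (j+1) (by omega) (by omega) r hr hrt b (((j+1:ℕ):ℝ)/L) q
      (by rw [div_lt_div_iff_of_pos_right hLpos]; linarith) le_rfl hq hq1
    simpa [sweepP, sweepL] using this
  · have e1 : (((L - j : ℕ) : ℝ)) = (L:ℝ) - j := by rw [Nat.cast_sub hj.le]
    have hjr : (j:ℝ) + 1 ≤ L := by exact_mod_cast hj
    have e2 : ((L:ℝ) - j) - 1 = (L:ℝ) - ((j+1:ℕ):ℝ) := by push_cast; ring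
    have := H.bwd_step t ht (L - j) (by omega) (by omega) r hr hrt b
      (((L:ℝ) - ((j+1:ℕ):ℝ))/L) q
      (by rw [div_lt_div_iff_of_pos_right hLpos, e1]; push_cast; linarith)
      (by rw [e1, e2]) (div_nonneg (by push_cast; linarith) hLpos.le) hq hq1
    rw [e1, e2] at this
    simp only [sweepP, sweepL, if_true, e1]
    exact this

lemma sweep_C (hL : 1 ≤ L) (H : IsLinearTP T L ξ ℓ' Γ C f χ) (a : Bool) {t : ℕ} (ht : t < T)
    {j : ℕ} (hj : j < L) {s : ℕ} (hs : s ≤ t) (p : ℝ)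
    (hp : ((sweepL L a j : ℝ) - 1) / L < p) (hp1 : p ≤ (sweepL L a j : ℝ) / L) :
    C (t:ℤ) (s:ℤ) a p =
      ∑ t' ∈ Finset.Icc (-1 : ℤ) (t : ℤ), ∑ s' ∈ Finset.Icc (-1 : ℤ) (s : ℤ), ∑ b : Bool,
          ∫ q in Ioc (0 : ℝ) 1,
            Γ t t' a b (sweepP L a j) q * C t' s' b q * Γ s s' a b (sweepP L a j) q := by
  have hLpos : (0:ℝ) < L := by exact_mod_cast hL
  have hm := sweepL_mem a hj
  cases a
  · have := H.fwd_C t ht s hs _ hm.1 hm.2 p hp hp1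
    simpa [sweepP, sweepL] using this
  · have := H.bwd_C t ht s hs _ hm.1 hm.2 p hp hp1
    rw [this]
    simp [sweepP, sweepL, Nat.cast_sub hj.le]

lemma sweep_C_const (hL : 1 ≤ L) (H : IsLinearTP T L ξ ℓ' Γ C f χ) (a : Bool) {t : ℕ} (ht : t < T)
    {j : ℕ} (hj : j < L) {s : ℕ} (hs : s ≤ t) (p : ℝ)
    (hp : ((sweepL L a j : ℝ) - 1) / L < p) (hp1 : p ≤ (sweepL L a j : ℝ) / L) :
    C (t:ℤ) (s:ℤ) a p = C (t:ℤ) (s:ℤ) a ((sweepL L a j : ℝ) / L) := by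
  have hLpos : (0:ℝ) < L := by exact_mod_cast hL
  rw [sweep_C hL H a ht hj hs p hp hp1, sweep_C hL H a ht hj hs _ _ le_rfl]
  rw [div_lt_div_iff_of_pos_right hLpos]; linarith

/-- the diagonal coefficient -/
lemma sweep_diag (hL : 1 ≤ L) (H : IsLinearTP T L ξ ℓ' Γ C f χ) (a : Bool) {t : ℕ} (ht : t < T)
    (b : Bool) (q : ℝ) (hq : 0 < q) (hq1 : q ≤ 1) (j : ℕ) (hj : j ≤ L) :
    |Γ t t a b (sweepP L a j) q| ≤ 1 ∧
    (Γ t t a b (sweepP L a j) q = 0 ∨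
      (b = a ∧ ∃ j' < j, (sweepL L a j' : ℤ) = ⌈(L:ℝ) * q⌉)) := by
  induction j with
  | zero =>
    have h := sweep_init hL H a ht t (by omega) le_rfl b q hq hq1
    rw [if_neg (by omega)] at h
    rw [h]; simp
  | succ j ih =>
    have h := sweep_step hL H a ht (j := j) (by omega) t (by omega) le_rfl b q hq hq1
    rw [Finset.sum_eq_zero (fun s hs => by
      rw [H.Γ_vanish s t (by exact_mod_cast Finset.mem_range.mp hs), zero_mul]), mul_zero,
      add_zero] at h
    obtain ⟨ih1, ih2⟩ := ih (by omega)
    by_cases hc : b = a ∧ (sweepL L a j : ℤ) = ⌈(L:ℝ) * q⌉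
    · rw [if_pos ⟨rfl, hc⟩] at h
      have hz : Γ t t a b (sweepP L a j) q = 0 := by
        rcases ih2 with hz | ⟨_, j', hj', hj''⟩
        · exact hz
        · exfalso
          have := sweepL_inj a (L := L) (j := j) (j' := j') (by omega) (by omega) (by
            have := hc.2.trans hj''.symm; exact_mod_cast this)
          omega
      rw [h, hz]
      exact ⟨by simp, Or.inr ⟨hc.1, j, by omega, hc.2⟩⟩
    · rw [if_neg (fun h' => hc h'.2), add_zero] at h
      rw [h]
      refine ⟨ih1, ih2.imp id ?_⟩
      rintro ⟨h1, j', h2, h3⟩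
      exact ⟨h1, j', by omega, h3⟩

/-- all quantities at times before `t` are bounded by `K` -/
def PriorBdd (Γ : ℕ → ℤ → Bool → Bool → ℝ → ℝ → ℝ) (C : ℤ → ℤ → Bool → ℝ → ℝ)
    (t : ℕ) (K : ℝ) : Prop :=
  (∀ s < t, ∀ r : ℤ, -1 ≤ r → r ≤ (s:ℤ) → ∀ a b : Bool, ∀ p q : ℝ, 0 ≤ p → p ≤ 1 → 0 < q → q ≤ 1 →
    |Γ s r a b p q| ≤ K) ∧
  (∀ s < t, ∀ r : ℤ, -1 ≤ r → r ≤ (s:ℤ) → ∀ a : Bool, ∀ p : ℝ, 0 < p → p ≤ 1 →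
    |C (s:ℤ) r a p| ≤ K)

lemma prior_C (H : IsLinearTP T L ξ ℓ' Γ C f χ) {t : ℕ} {K : ℝ} (hK : 1 ≤ K)
    (hB : PriorBdd Γ C t K) (t' s' : ℤ) (h1 : -1 ≤ t') (h2 : t' < t) (h3 : -1 ≤ s') (h4 : s' < t)
    (b : Bool) (q : ℝ) (hq : 0 < q) (hq1 : q ≤ 1) : |C t' s' b q| ≤ K := by
  have aux : ∀ t' s' : ℤ, -1 ≤ t' → t' < t → -1 ≤ s' → s' ≤ t' → |C t' s' b q| ≤ K := by
    intro t' s' h1 h2 h3 h4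
    rcases eq_or_lt_of_le h1 with h | h
    · have : s' = -1 := by omega
      subst this; rw [← h, H.C_base]; simpa using hK
    · obtain ⟨n, rfl⟩ := Int.eq_ofNat_of_zero_le (show 0 ≤ t' by omega)
      exact hB.2 n (by exact_mod_cast h2) s' h3 h4 b q hq hq1
  rcases le_total s' t' with h | h
  · exact aux t' s' h1 h2 h3 h
  · rw [H.C_symm]; exact aux s' t' h3 h4 h1 h

lemma tri_sum (t s : ℕ) (hs : s ≤ t) (X : ℝ) (hX : 0 ≤ X) (F : ℤ → ℤ → Bool → ℝ)
    (h : ∀ t' s' : ℤ, -1 ≤ t' → t' ≤ t → -1 ≤ s' → s' ≤ s → ∀ b, |F t' s' b| ≤ X) :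
    |∑ t' ∈ Finset.Icc (-1 : ℤ) (t : ℤ), ∑ s' ∈ Finset.Icc (-1 : ℤ) (s : ℤ), ∑ b : Bool, F t' s' b|
      ≤ 2 * ((t:ℝ) + 2)^2 * X := by
  have key : |∑ t' ∈ Finset.Icc (-1 : ℤ) (t : ℤ), ∑ s' ∈ Finset.Icc (-1 : ℤ) (s : ℤ),
      ∑ b : Bool, F t' s' b| ≤ ∑ t' ∈ Finset.Icc (-1 : ℤ) (t : ℤ),
        ∑ s' ∈ Finset.Icc (-1 : ℤ) (s : ℤ), ∑ b : Bool, X := by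
    refine (Finset.abs_sum_le_sum_abs _ _).trans (Finset.sum_le_sum fun t' ht' => ?_)
    refine (Finset.abs_sum_le_sum_abs _ _).trans (Finset.sum_le_sum fun s' hs' => ?_)
    refine (Finset.abs_sum_le_sum_abs _ _).trans (Finset.sum_le_sum fun b _ => ?_)
    rw [Finset.mem_Icc] at ht' hs'
    exact h t' s' ht'.1 ht'.2 hs'.1 hs'.2 b
  refine key.trans ?_
  have c1 : (((t:ℤ) + 1 - (-1)).toNat : ℝ) = (t:ℝ) + 2 := by
    have : ((t:ℤ) + 1 - (-1)).toNat = t + 2 := by omega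
    rw [this]; push_cast; ring
  have c2 : (((s:ℤ) + 1 - (-1)).toNat : ℝ) = (s:ℝ) + 2 := by
    have : ((s:ℤ) + 1 - (-1)).toNat = s + 2 := by omega
    rw [this]; push_cast; ring
  simp only [Finset.sum_const, Int.card_Icc, nsmul_eq_mul, c1, c2, Finset.card_univ,
    Fintype.card_bool]
  have hsr : (s:ℝ) ≤ t := by exact_mod_cast hs
  have : ((t:ℝ)+2) * (((s:ℝ)+2) * ((2:ℕ) * X)) ≤ ((t:ℝ)+2) * (((t:ℝ)+2) * ((2:ℕ) * X)) := by
    gcongr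
  push_cast at this ⊢
  nlinarith

/-- bound for the memory term of the covariance recursion -/
lemma diag_term (hL : 1 ≤ L) (H : IsLinearTP T L ξ ℓ' Γ C f χ) (a : Bool) {t : ℕ} (ht : t < T)
    {j : ℕ} (hj : j < L) {s : ℕ} (s' : ℤ) (hs' : -1 ≤ s') (hs't : s' ≤ t) (b : Bool)
    (K N lam : ℝ) (hK : 0 ≤ K) (hN : 0 ≤ N) (hlam : 0 < lam)
    (hΓ : ∀ q, 0 < q → q ≤ 1 → |Γ s s' a b (sweepP L a j) q| ≤ K)
    (hC : ∀ s'' : ℕ, s' = (s'':ℤ) → ∀ j' < j,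
      |C (t:ℤ) (s'':ℤ) a ((sweepL L a j' : ℝ) / L)| ≤ N * Real.exp (lam * (j' / L))) :
    |∫ q in Ioc (0 : ℝ) 1, Γ t t a b (sweepP L a j) q * C t s' b q * Γ s s' a b (sweepP L a j) q|
      ≤ K * N * Real.exp (lam * (j / L)) / lam := by
  have hLpos : (0:ℝ) < L := by exact_mod_cast hL
  have hjL : (j:ℝ) / L ≤ 1 := by rw [div_le_one hLpos]; exact_mod_cast hj.le
  have := int_bound a (fun q => Γ t t a b (sweepP L a j) q * C t s' b q *
    Γ s s' a b (sweepP L a j) q) 0 (K * N) lam (j / L) (by positivity) hlam (by positivity) hjL ?_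
  · simpa using this
  intro q hq
  have hnn : 0 ≤ 0 + (if sweepU a q ≤ (j:ℝ) / L then K * N * Real.exp (lam * sweepU a q) else 0) := by
    split_ifs <;> positivity
  obtain ⟨hd1, hd2⟩ := sweep_diag hL H a ht b q hq.1 hq.2.le j hj.le
  rcases hd2 with hz | ⟨rfl, j', hj', hc⟩
  · simp only [hz, zero_mul, abs_zero]; exact hnn
  obtain ⟨g1, g2, g3, g4⟩ := sweep_cover hL b hj.le hj' hc
  rcases eq_or_lt_of_le hs' with h | h
  · rw [← h, H.C_mixed t (by positivity)]
    simp only [mul_zero, zero_mul, abs_zero]; exact hnn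
  obtain ⟨n, rfl⟩ := Int.eq_ofNat_of_zero_le (show 0 ≤ s' by omega)
  rw [if_pos g4, zero_add]
  have hCq : |C t n b q| ≤ N * Real.exp (lam * sweepU b q) := by
    rw [sweep_C_const hL H b ht (j := j') (by omega) (by exact_mod_cast hs't) q g1 g2]
    refine (hC n rfl j' hj').trans ?_
    gcongr
  have hG := hΓ q hq.1 hq.2.le
  rw [abs_mul, abs_mul]
  calc _ ≤ 1 * (N * Real.exp (lam * sweepU b q)) * K := by gcongr
    _ = _ := by ring

lemma stage_one (hL : 1 ≤ L) (H : IsLinearTP T L ξ ℓ' Γ C f χ) (a : Bool) {t : ℕ} (ht : t < T)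
    (K W K1 : ℝ) (hK : 1 ≤ K) (hW : 1 ≤ W) (hw : |if a then χ t else ξ t| ≤ W)
    (hB : PriorBdd Γ C t K) (hK1 : K1 = 2 * ((t:ℝ) + 2)^2 * K^2) :
    (∀ j ≤ L, ∀ r : ℤ, -1 ≤ r → r < t → ∀ b q, 0 < q → q ≤ 1 →
      |Γ t r a b (sweepP L a j) q| ≤ W * Real.exp (2*K1^2+2*K1)) ∧
    (∀ j < L, ∀ s < t, |C (t:ℤ) (s:ℤ) a ((sweepL L a j : ℝ) / L)| ≤
      2 * K1 * W * Real.exp (2*K1^2+2*K1)) := by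
  have hLpos : (0:ℝ) < L := by exact_mod_cast hL
  have ht0 : (0:ℝ) ≤ t := by positivity
  have hK2 : 1 ≤ K^2 := by nlinarith
  have hK1' : 1 ≤ K1 := by rw [hK1]; nlinarith [mul_nonneg (sq_nonneg ((t:ℝ)+2)) (sub_nonneg.mpr hK2)]
  have htK : t * K ≤ K1 := by
    rw [hK1]
    have : (t:ℝ) * K ≤ ((t:ℝ)+2)^2 * K^2 := by
      have h1 : (t:ℝ) ≤ ((t:ℝ)+2)^2 := by nlinarith
      have h2 : K ≤ K^2 := by nlinarith
      gcongr
    nlinarith [mul_nonneg (sq_nonneg ((t:ℝ)+2)) (sq_nonneg K)]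
  have hlam : 0 < 2*K1^2+2*K1 := by positivity
  have hdiv : ∀ j < L, 0 < (sweepL L a j : ℝ) / L ∧ (sweepL L a j : ℝ) / L ≤ 1 := by
    intro j hj
    obtain ⟨h1, h2⟩ := sweepL_mem a hj
    have h1' : (1:ℝ) ≤ sweepL L a j := by exact_mod_cast h1
    refine ⟨by positivity, ?_⟩
    rw [div_le_one hLpos]; exact_mod_cast h2
  have core := core_gronwall (ι := {x : ℤ × Bool × ℝ // -1 ≤ x.1 ∧ x.1 < t ∧ 0 < x.2.2 ∧ x.2.2 ≤ 1})
    (κ := {s : ℕ // s < t}) L hL K1 W hK1' (by linarith)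
    (fun j x => Γ t x.1.1 a x.1.2.1 (sweepP L a j) x.1.2.2)
    (fun j s => C (t:ℤ) (s.1:ℤ) a ((sweepL L a j : ℝ) / L)) ?_ ?_ ?_
  · refine ⟨fun j hj r hr hrt b q hq hq1 => core.1 j hj ⟨(r, b, q), hr, hrt, hq, hq1⟩,
      fun j hj s hs => core.2 j hj ⟨s, hs⟩⟩
  · rintro ⟨⟨r, b, q⟩, hr, hrt, hq, hq1⟩
    simp only at hr hrt hq hq1 ⊢
    rw [sweep_init hL H a ht r hr hrt.le b q hq hq1]
    by_cases hc : r = -1 ∧ b = a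
    · rw [if_pos hc]; exact hw
    · rw [if_neg hc]; simp; linarith
  · rintro j hj M N hM hN hG hD ⟨⟨r, b, q⟩, hr, hrt, hq, hq1⟩
    simp only at hr hrt hq hq1 ⊢
    rw [sweep_step hL H a ht hj r hr hrt.le b q hq hq1, if_neg (by omega), add_zero]
    have hG0 := hG ⟨(r, b, q), hr, hrt, hq, hq1⟩
    simp only at hG0
    have hsum : |∑ s ∈ Finset.range t, Γ s r (!a) b (sweepP L a (j+1)) q *
            (Γ t (s:ℤ) a (!a) (sweepP L a j) ((sweepL L a j : ℝ) / L)
              - C (t:ℤ) (s:ℤ) a ((sweepL L a j : ℝ) / L))| ≤ t * (K * (M + N)) := by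
      refine (Finset.abs_sum_le_sum_abs _ _).trans ?_
      have : ∀ s ∈ Finset.range t, |Γ s r (!a) b (sweepP L a (j+1)) q *
            (Γ t (s:ℤ) a (!a) (sweepP L a j) ((sweepL L a j : ℝ) / L)
              - C (t:ℤ) (s:ℤ) a ((sweepL L a j : ℝ) / L))| ≤ K * (M + N) := by
        intro s hs
        rw [Finset.mem_range] at hs
        have k1 : |Γ s r (!a) b (sweepP L a (j+1)) q| ≤ K := by
          rcases le_or_gt r s with h | h
          · have hP := sweepP_mem hL a (show j+1 ≤ L by omega)
            exact hB.1 s hs r hr h _ _ _ _ hP.1 hP.2 hq hq1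
          · rw [H.Γ_vanish s r h]; simp; linarith
        have k2 := hG ⟨((s:ℤ), !a, (sweepL L a j : ℝ) / L), by simp, by simpa using hs, (hdiv j hj).1,
          (hdiv j hj).2⟩
        have k3 := hD ⟨s, hs⟩
        simp only at k2 k3
        rw [abs_mul]
        have k4 := (abs_sub (Γ t (s:ℤ) a (!a) (sweepP L a j) ((sweepL L a j : ℝ) / L))
          (C (t:ℤ) (s:ℤ) a ((sweepL L a j : ℝ) / L))).trans (add_le_add k2 k3)
        gcongr
      refine (Finset.sum_le_sum this).trans ?_
      simp
    refine (abs_add_le _ _).trans ?_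
    refine add_le_add hG0 ?_
    rw [abs_mul, abs_of_nonneg (by positivity)]
    calc 1 / (L:ℝ) * _ ≤ 1 / (L:ℝ) * (t * (K * (M + N))) := by gcongr
      _ = (t * K) / L * (M + N) := by ring
      _ ≤ _ := by gcongr
  · rintro j hj M N hM hN hG hD ⟨s, hs⟩
    simp only at hG hD ⊢
    have hjL : (j:ℝ) / L ≤ 1 := by rw [div_le_one hLpos]; exact_mod_cast hj.le
    have hP := sweepP_mem hL a hj.le
    rw [sweep_C hL H a ht hj hs.le _ (by rw [div_lt_div_iff_of_pos_right hLpos]; linarith) le_rfl]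
    set X := M + N * Real.exp ((2*K1^2+2*K1) * (j / L)) / (2*K1^2+2*K1) with hX
    have hX0 : 0 ≤ X := by positivity
    have hrest : 0 ≤ N * Real.exp ((2*K1^2+2*K1) * (j / L)) / (2*K1^2+2*K1) := by positivity
    refine (tri_sum t s hs.le (K^2 * X) (by positivity) _ ?_).trans (le_of_eq (by rw [hK1]; ring))
    intro t' s' h1 h2 h3 h4 b
    have hΓs : ∀ q, 0 < q → q ≤ 1 → |Γ s s' a b (sweepP L a j) q| ≤ K := fun q hq hq1 =>
      hB.1 s hs s' h3 h4 a b _ q hP.1 hP.2 hq hq1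
    rcases eq_or_lt_of_le h2 with h | h
    · subst h
      refine (diag_term hL H a ht hj s' h3 (by omega) b K N _ (by linarith) hN hlam hΓs ?_).trans ?_
      · intro s'' hs'' j' hj'
        exact hD j' hj' ⟨s'', by omega⟩
      · calc _ = K * (N * Real.exp ((2*K1^2+2*K1) * (j / L)) / (2*K1^2+2*K1)) := by ring
          _ ≤ K^2 * X := by
            apply mul_le_mul (by nlinarith) (by linarith) hrest (by positivity)
    · have := int_bound a (fun q => Γ t t' a b (sweepP L a j) q * C t' s' b q *
        Γ s s' a b (sweepP L a j) q) (K^2 * M) 0 1 (j / L) le_rfl one_pos (by positivity) hjL ?_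
      · refine this.trans ?_
        rw [hX]; simp; nlinarith
      · intro q hq
        simp only [zero_mul, ite_self, add_zero]
        have k1 := hG ⟨(t', b, q), h1, h, hq.1, hq.2.le⟩
        have k2 := prior_C H hK hB t' s' h1 h h3 (by omega) b q hq.1 hq.2.le
        have k3 := hΓs q hq.1 hq.2.le
        simp only at k1
        rw [abs_mul, abs_mul]
        calc _ ≤ M * K * K := by gcongr
          _ = _ := by ring

lemma stage_two (hL : 1 ≤ L) (H : IsLinearTP T L ξ ℓ' Γ C f χ) (a : Bool) {t : ℕ} (ht : t < T)
    (K K2 : ℝ) (hK : 1 ≤ K) (hB : PriorBdd Γ C t K)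
    (hG : ∀ j ≤ L, ∀ r : ℤ, -1 ≤ r → r < t → ∀ b q, 0 < q → q ≤ 1 →
      |Γ t r a b (sweepP L a j) q| ≤ K)
    (hC : ∀ j < L, ∀ s < t, |C (t:ℤ) (s:ℤ) a ((sweepL L a j : ℝ) / L)| ≤ K)
    (hK2 : K2 = 2 * ((t:ℝ) + 2)^2 * K^3) :
    (∀ j < L, |C (t:ℤ) (t:ℤ) a ((sweepL L a j : ℝ) / L)| ≤
      2 * K2 * Real.exp (2*K2^2+2*K2)) := by
  have hLpos : (0:ℝ) < L := by exact_mod_cast hL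
  have hK3 : 1 ≤ K^3 := one_le_pow₀ hK
  have ht0 : (0:ℝ) ≤ t := by positivity
  have hK2' : 1 ≤ K2 := by rw [hK2]; nlinarith [mul_nonneg (sq_nonneg ((t:ℝ)+2)) (sub_nonneg.mpr hK3)]
  have hlam : 0 < 2*K2^2+2*K2 := by positivity
  have hGall : ∀ j ≤ L, ∀ r : ℤ, -1 ≤ r → r ≤ t → ∀ b q, 0 < q → q ≤ 1 →
      |Γ t r a b (sweepP L a j) q| ≤ K := by
    intro j hj r hr hrt b q hq hq1
    rcases eq_or_lt_of_le hrt with h | h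
    · subst h; exact (sweep_diag hL H a ht b q hq hq1 j hj).1.trans hK
    · exact hG j hj r hr h b q hq hq1
  have hCt : ∀ r : ℤ, -1 ≤ r → r < t → ∀ q, 0 < q → q ≤ 1 → |C (t:ℤ) r a q| ≤ K := by
    intro r hr hrt q hq hq1
    rcases eq_or_lt_of_le hr with h | h
    · rw [← h, H.C_mixed t (by positivity)]; simp; linarith
    · obtain ⟨n, rfl⟩ := Int.eq_ofNat_of_zero_le (show 0 ≤ r by omega)
      obtain ⟨l, l1, l2, l3, l4⟩ := exists_cell hL hq hq1
      obtain ⟨j, hj, rfl⟩ := sweepL_surj a l1 l2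
      rw [sweep_C_const hL H a ht hj (by omega) q l3 l4]
      exact hC j hj n (by omega)
  have core := core_gronwall (ι := Unit) (κ := Unit) L hL K2 1 hK2' zero_le_one
    (fun _ _ => (1:ℝ)) (fun j _ => C (t:ℤ) (t:ℤ) a ((sweepL L a j : ℝ) / L)) ?_ ?_ ?_
  · intro j hj
    simpa using core.2 j hj ()
  · intro _; simp
  · intro j hj M N hM hN hG _ _
    have h0 : 0 ≤ K2 / L * (M + N) := by positivity
    exact (hG ()).trans (by linarith)
  · rintro j hj M N hM hN hM1 hD _
    have hM1 : 1 ≤ M := by simpa using hM1 ()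
    have hjL : (j:ℝ) / L ≤ 1 := by rw [div_le_one hLpos]; exact_mod_cast hj.le
    rw [sweep_C hL H a ht hj le_rfl _ (by rw [div_lt_div_iff_of_pos_right hLpos]; linarith) le_rfl]
    set X := M + N * Real.exp ((2*K2^2+2*K2) * (j / L)) / (2*K2^2+2*K2) with hX
    have hX0 : 0 ≤ X := by positivity
    have hrest : 0 ≤ N * Real.exp ((2*K2^2+2*K2) * (j / L)) / (2*K2^2+2*K2) := by positivity
    refine (tri_sum t t le_rfl (K^3 * X) (by positivity) _ ?_).trans (le_of_eq (by rw [hK2]; ring))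
    intro t' s' h1 h2 h3 h4 b
    by_cases hts : t' = t ∧ s' = t
    · obtain ⟨rfl, rfl⟩ := hts
      refine (diag_term hL H a ht hj t (by omega) le_rfl b 1 N _ zero_le_one hN hlam ?_ ?_).trans ?_
      · intro q hq hq1
        exact (sweep_diag hL H a ht b q hq hq1 j hj.le).1
      · intro s'' hs'' j' hj'
        rw [← hs'']
        exact hD j' hj' ()
      · calc _ = 1 * (N * Real.exp ((2*K2^2+2*K2) * (j / L)) / (2*K2^2+2*K2)) := by ring
          _ ≤ K^3 * X := by
            apply mul_le_mul hK3 (by linarith) hrest (by positivity)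
    · have := int_bound a (fun q => Γ t t' a b (sweepP L a j) q * C t' s' b q *
        Γ t s' a b (sweepP L a j) q) (K^3) 0 1 (j / L) le_rfl one_pos (by positivity) hjL ?_
      · refine this.trans ?_
        simp only [zero_mul, zero_div, add_zero]
        have : 1 ≤ X := by linarith
        nlinarith
      · intro q hq
        simp only [zero_mul, ite_self, add_zero]
        have k1 := hGall j hj.le t' h1 h2 b q hq.1 hq.2.le
        have k3 := hGall j hj.le s' h3 h4 b q hq.1 hq.2.le
        have fin : |C t' s' b q| ≤ K → |Γ t t' a b (sweepP L a j) q * C t' s' b q *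
            Γ t s' a b (sweepP L a j) q| ≤ K^3 := by
          intro k2
          rw [abs_mul, abs_mul]
          calc _ ≤ K * K * K := by gcongr
            _ = _ := by ring
        rcases eq_or_lt_of_le h2 with h | h
        · subst h
          rcases (sweep_diag hL H a ht b q hq.1 hq.2.le j hj.le).2 with hz | ⟨hb, _⟩
          · rw [hz]; simp; positivity
          · subst hb
            exact fin (hCt s' h3 (by omega) q hq.1 hq.2.le)
        · rcases eq_or_lt_of_le h4 with h' | h'
          · subst h'
            rcases (sweep_diag hL H a ht b q hq.1 hq.2.le j hj.le).2 with hz | ⟨hb, _⟩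
            · rw [hz]; simp; positivity
            · subst hb
              exact fin (by rw [H.C_symm]; exact hCt t' h1 h q hq.1 hq.2.le)
          · exact fin (prior_C H hK hB t' s' h1 h h3 h' b q hq.1 hq.2.le)

/-- one complete sweep at time `t` -/
lemma stage (t : ℕ) (K W : ℝ) (hK : 1 ≤ K) (hW : 1 ≤ W) : ∃ c : ℝ, 1 ≤ c ∧
    ∀ (T L : ℕ) (ξ : ℕ → ℝ) (ℓ' : ℕ → ℝ → ℝ)
    (Γ : ℕ → ℤ → Bool → Bool → ℝ → ℝ → ℝ)
    (C : ℤ → ℤ → Bool → ℝ → ℝ)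
    (f χ : ℕ → ℝ) (a : Bool), 1 ≤ L → IsLinearTP T L ξ ℓ' Γ C f χ → t < T →
    |if a then χ t else ξ t| ≤ W → PriorBdd Γ C t K →
    (∀ r : ℤ, -1 ≤ r → r ≤ (t:ℤ) → ∀ b : Bool, ∀ p q : ℝ, 0 ≤ p → p ≤ 1 → 0 < q → q ≤ 1 →
      |Γ t r a b p q| ≤ c) ∧
    (∀ r : ℤ, -1 ≤ r → r ≤ (t:ℤ) → ∀ p : ℝ, 0 < p → p ≤ 1 → |C (t:ℤ) r a p| ≤ c) := by
  obtain ⟨K1, hK1⟩ : ∃ K1, K1 = 2 * ((t:ℝ) + 2)^2 * K^2 := ⟨_, rfl⟩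
  have hK10 : 0 ≤ K1 := by rw [hK1]; positivity
  set E := Real.exp (2*K1^2+2*K1) with hE
  have hE0 : 0 < E := Real.exp_pos _
  obtain ⟨c1, hc1⟩ : ∃ c1, c1 = K + W * E + 2 * K1 * W * E := ⟨_, rfl⟩
  have hWE : 0 ≤ W * E := by positivity
  have hKWE : 0 ≤ 2 * K1 * W * E := by positivity
  have hc11 : 1 ≤ c1 := by linarith
  obtain ⟨K2, hK2⟩ : ∃ K2, K2 = 2 * ((t:ℝ) + 2)^2 * c1^3 := ⟨_, rfl⟩
  have hK20 : 0 ≤ K2 := by rw [hK2]; positivity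
  have hlast : 0 ≤ 2 * K2 * Real.exp (2*K2^2+2*K2) := by positivity
  refine ⟨c1 + 2 * K2 * Real.exp (2*K2^2+2*K2), by linarith, ?_⟩
  intro T L ξ ℓ' Γ C f χ a hL H ht hw hB
  have hLpos : (0:ℝ) < L := by exact_mod_cast hL
  obtain ⟨s1, s2⟩ := stage_one hL H a ht K W K1 hK hW hw hB hK1
  have hB' : PriorBdd Γ C t c1 := by
    refine ⟨fun s hs r h1 h2 a b p q h3 h4 h5 h6 => (hB.1 s hs r h1 h2 a b p q h3 h4 h5 h6).trans
      (by linarith), fun s hs r h1 h2 a p h3 h4 => (hB.2 s hs r h1 h2 a p h3 h4).trans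
      (by linarith)⟩
  have s1' : ∀ j ≤ L, ∀ r : ℤ, -1 ≤ r → r < t → ∀ b q, 0 < q → q ≤ 1 →
      |Γ t r a b (sweepP L a j) q| ≤ c1 := fun j hj r h1 h2 b q h3 h4 =>
    (s1 j hj r h1 h2 b q h3 h4).trans (by linarith)
  have s2' : ∀ j < L, ∀ s < t, |C (t:ℤ) (s:ℤ) a ((sweepL L a j : ℝ) / L)| ≤ c1 :=
    fun j hj s hs => (s2 j hj s hs).trans (by linarith)
  have s3 := stage_two hL H a ht c1 K2 hc11 hB' s1' s2' hK2
  refine ⟨?_, ?_⟩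
  · intro r hr hrt b p q hp hp1 hq hq1
    have grid : ∀ m ≤ L, |Γ t r a b ((m:ℝ)/L) q| ≤ c1 + 2 * K2 * Real.exp (2*K2^2+2*K2) := by
      intro m hm
      obtain ⟨j, hj, hjm⟩ := sweepP_surj a hm
      rw [← hjm]
      rcases eq_or_lt_of_le hrt with h | h
      · subst h
        have := (sweep_diag hL H a ht b q hq hq1 j hj).1
        linarith
      · have := s1' j hj r hr h b q hq hq1
        linarith
    rcases eq_or_lt_of_le hp with h | h
    · have := grid 0 (Nat.zero_le _)
      rw [← h]; simpa using this
    · obtain ⟨l, l1, l2, l3, l4⟩ := exists_cell hL h hp1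
      rw [H.Γ_const t ht r hr hrt a b l l1 l2 p q l3 l4 hq hq1]
      exact grid l l2
  · intro r hr hrt p hp hp1
    rcases eq_or_lt_of_le hr with h | h
    · rw [← h, H.C_mixed t (by positivity)]; simp; linarith
    · obtain ⟨n, rfl⟩ := Int.eq_ofNat_of_zero_le (show 0 ≤ r by omega)
      obtain ⟨l, l1, l2, l3, l4⟩ := exists_cell hL hp hp1
      obtain ⟨j, hj, rfl⟩ := sweepL_surj a l1 l2
      rw [sweep_C_const hL H a ht hj (by omega) p l3 l4]
      rcases eq_or_lt_of_le hrt with h' | h'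
      · rw [h']
        have := s3 j hj
        linarith
      · have := s2' j hj n (by omega)
        linarith

end Sweep

lemma prior_all (T : ℕ) (ξ : ℕ → ℝ) (ℓ' : ℕ → ℝ → ℝ)
    (hcont : ∀ t : ℕ, Continuous (ℓ' t)) (t : ℕ) (ht : t ≤ T) :
    ∃ c : ℝ, 1 ≤ c ∧ ∀ (L : ℕ)
    (Γ : ℕ → ℤ → Bool → Bool → ℝ → ℝ → ℝ)
    (C : ℤ → ℤ → Bool → ℝ → ℝ)
    (f χ : ℕ → ℝ), 1 ≤ L → IsLinearTP T L ξ ℓ' Γ C f χ → PriorBdd Γ C t c := by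
  induction t with
  | zero =>
    exact ⟨1, le_rfl, fun L Γ C f χ _ _ => ⟨fun s hs => absurd hs (by omega),
      fun s hs => absurd hs (by omega)⟩⟩
  | succ t ih =>
    obtain ⟨K, hK, hB⟩ := ih (by omega)
    obtain ⟨c0, hc0, h0⟩ := stage t K (|ξ t| + 1) hK (by linarith [abs_nonneg (ξ t)])
    obtain ⟨Y, hY⟩ := (isCompact_Icc (a := -c0) (b := c0)).exists_bound_of_continuousOn
      (hcont t).continuousOn
    obtain ⟨c1, hc1, h1⟩ := stage t K (|Y| + 1) hK (by linarith [abs_nonneg Y])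
    refine ⟨K + c0 + c1, by linarith, ?_⟩
    intro L Γ C f χ hL H
    have hB := hB L Γ C f χ hL H
    have r0 := h0 T L ξ ℓ' Γ C f χ false hL H (by omega) (by simp) hB
    have hf : |f t| ≤ c0 := by
      rw [H.f_def t (by omega)]
      exact r0.1 (-1) le_rfl (by omega) true 1 1 zero_le_one le_rfl one_pos le_rfl
    have hχ : |χ t| ≤ |Y| + 1 := by
      rw [H.χ_def t (by omega)]
      have := hY (f t) (abs_le.mp hf)
      rw [Real.norm_eq_abs] at this
      linarith [le_abs_self Y]
    have r1 := h1 T L ξ ℓ' Γ C f χ true hL H (by omega) (by simpa using hχ) hB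
    refine ⟨?_, ?_⟩
    · intro s hs r hr hrs a b p q hp hp1 hq hq1
      rcases Nat.lt_succ_iff_lt_or_eq.mp hs with h | h
      · have := hB.1 s h r hr hrs a b p q hp hp1 hq hq1
        linarith
      · subst h
        cases a
        · have := r0.1 r hr hrs b p q hp hp1 hq hq1
          linarith
        · have := r1.1 r hr hrs b p q hp hp1 hq hq1
          linarith
    · intro s hs r hr hrs a p hp hp1
      rcases Nat.lt_succ_iff_lt_or_eq.mp hs with h | h
      · have := hB.2 s h r hr hrs a p hp hp1
        linarith
      · subst h
        cases a
        · have := r0.2 r hr hrs p hp hp1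
          linarith
        · have := r1.2 r hr hrs p hp hp1
          linarith

/-- Uniform boundedness: `|Γ^L| ≤ c` and `|C^L| ≤ c` for all `L = 2^k`,
`k ≥ k₀`, uniformly over all admissible indices and arguments. -/
theorem stmt_11
    (T : ℕ) (hT : 1 ≤ T) (ξ : ℕ → ℝ) (ℓ : ℕ → ℝ → ℝ) (ℓ' : ℕ → ℝ → ℝ)
    (hderiv : ∀ (t : ℕ) (x : ℝ), HasDerivAt (ℓ t) (ℓ' t x) x)
    (hlip : ∀ t : ℕ, LocallyLipschitz (ℓ' t))
    (Γ : ℕ → ℕ → ℤ → Bool → Bool → ℝ → ℝ → ℝ)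
    (C : ℕ → ℤ → ℤ → Bool → ℝ → ℝ)
    (f χ : ℕ → ℕ → ℝ)
    (hTP : ∀ L : ℕ, 1 ≤ L → IsLinearTP T L ξ ℓ' (Γ L) (C L) (f L) (χ L)) :
    ∃ c : ℝ, 0 < c ∧ ∃ k₀ : ℕ, ∀ k : ℕ, k₀ ≤ k →
      ∀ t : ℕ, t < T → ∀ r : ℤ, -1 ≤ r → r ≤ (t : ℤ) → ∀ a b : Bool,
        ∀ p : ℝ, 0 ≤ p → p ≤ 1 → ∀ q : ℝ, 0 < q → q ≤ 1 →
          |Γ (2 ^ k) t r a b p q| ≤ c ∧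
          (0 < p → |C (2 ^ k) (t : ℤ) r a p| ≤ c) := by
  obtain ⟨c, hc, h⟩ := prior_all T ξ ℓ' (fun t => (hlip t).continuous) T le_rfl
  refine ⟨c, by linarith, 0, ?_⟩
  intro k _ t ht r hr hrt a b p hp hp1 q hq hq1
  have hL : 1 ≤ 2 ^ k := Nat.one_le_two_pow
  have hB := h (2 ^ k) _ _ _ _ hL (hTP (2 ^ k) hL)
  exact ⟨hB.1 t ht r hr hrt a b p q hp hp1 hq hq1, fun hp0 => hB.2 t ht r hr hrt a p hp0 hp1⟩
end

section
/- With Γ^L and C^L as defined in the context, there exist a constant c > 0 and an integer k₀ such that for every L = 2^k with k ≥ k₀, every admissible index (t, r, a, b) with r < t, every q ∈ (0,1], and all grid points p, p' ∈ {0, 1/L, 2/L, …, 1} (with p, p' > 0 for C): |Γ^L_{t,r,a,b}(p, q) − Γ^L_{t,r,a,b}(p', q)| ≤ c·|p − p'| and |C^L_{t,r,a}(p) − C^L_{t,r,a}(p')| ≤ c·|p − p'|; i.e., Γ^L and C^L are c-Lipschitz in the layer variable p along the grid, uniformly in L. -/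
open MeasureTheory Set Finset Filter Topology

/-- Discrete Gronwall lemma in predicate form. -/
lemma gron (L : ℕ) (hL : 1 ≤ L) (K N : ℝ) (hK : 1 ≤ K) (hN : 0 ≤ N)
    (PG PD : ℕ → ℝ → Prop)
    (mG : ∀ i x y, x ≤ y → PG i x → PG i y)
    (mD : ∀ i x y, x ≤ y → PD i x → PD i y)
    (h0 : PG 0 N)
    (h1 : ∀ i < L, ∀ M D : ℝ, 0 ≤ M → 0 ≤ D → PG i M → PD i D → PG (i+1) (M + K / L * (M + D)))
    (h2 : ∀ i < L, ∀ (M : ℝ) (E : ℕ → ℝ), 0 ≤ M → (∀ m, 0 ≤ E m) → PG i M →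
      (∀ m < i, PD m (E m)) → PD i (K * (M + 1 / L * ∑ m ∈ Finset.range i, E m))) :
    (∀ i ≤ L, PG i (2 * K * (N * Real.exp (K * (1 + 2 * K))))) ∧
    (∀ i < L, PD i (2 * K * (N * Real.exp (K * (1 + 2 * K))))) := by
  have hLp : (0:ℝ) < L := by exact_mod_cast hL
  set κ := K * (1 + 2 * K) with hκ
  have hκK : 2 * K ≤ κ := by nlinarith
  have hκ0 : 0 < κ := by nlinarith
  set ρ : ℝ := 1 + κ / L with hρ
  have hρ1 : 1 ≤ ρ := by rw [hρ]; have := div_pos hκ0 hLp; linarith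
  have hM0 : ∀ i : ℕ, 0 ≤ N * ρ ^ i := fun i => by positivity
  have geo : ∀ i : ℕ, 1 / (L:ℝ) * ∑ m ∈ Finset.range i, 2 * K * (N * ρ ^ m) ≤ N * ρ ^ i := by
    intro i
    have : ∀ i : ℕ, κ / L * ∑ m ∈ Finset.range i, (N * ρ ^ m) = N * ρ ^ i - N := by
      intro i
      induction i with
      | zero => simp
      | succ i ih => rw [Finset.sum_range_succ, mul_add, ih, pow_succ, hρ]; ring
    have h3 := this i
    rw [← Finset.mul_sum]
    have hS : 0 ≤ ∑ m ∈ Finset.range i, (N * ρ ^ m) := Finset.sum_nonneg fun m _ => hM0 m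
    calc 1 / (L:ℝ) * (2 * K * ∑ m ∈ Finset.range i, (N * ρ ^ m))
        = 2 * K * (1 / (L:ℝ) * ∑ m ∈ Finset.range i, (N * ρ ^ m)) := by ring
      _ ≤ κ * (1 / (L:ℝ) * ∑ m ∈ Finset.range i, (N * ρ ^ m)) := by gcongr
      _ = κ / L * ∑ m ∈ Finset.range i, (N * ρ ^ m) := by ring
      _ ≤ _ := by rw [h3]; linarith
  have key : ∀ i ≤ L, PG i (N * ρ ^ i) ∧ ∀ m < i, PD m (2 * K * (N * ρ ^ m)) := by
    have hD : ∀ i < L, (PG i (N * ρ ^ i) ∧ ∀ m < i, PD m (2 * K * (N * ρ ^ m))) →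
        PD i (2 * K * (N * ρ ^ i)) := by
      intro i hi h
      refine mD _ _ _ ?_ (h2 i hi _ (fun m => 2 * K * (N * ρ ^ m)) (hM0 i)
        (fun m => by have := hM0 m; positivity) h.1 h.2)
      have := geo i
      nlinarith [mul_le_mul_of_nonneg_left this (by linarith : (0:ℝ) ≤ K)]
    intro i
    induction i with
    | zero => intro _; exact ⟨by simpa using h0, fun m hm => by omega⟩
    | succ i ih =>
      intro hi
      have h := ih (by omega)
      have hd := hD i (by omega) h
      refine ⟨?_, fun m hm => ?_⟩
      · refine mG _ _ _ ?_ (h1 i (by omega) _ _ (hM0 i) (by have := hM0 i; positivity) h.1 hd)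
        rw [pow_succ, hρ, hκ]
        apply le_of_eq; ring
      · rcases Nat.lt_succ_iff_lt_or_eq.mp hm with h' | h'
        · exact h.2 m h'
        · subst h'; exact hd
  have hexp : ∀ i ≤ L, ρ ^ i ≤ Real.exp κ := by
    intro i hi
    calc ρ ^ i ≤ ρ ^ L := pow_le_pow_right₀ hρ1 hi
      _ ≤ (Real.exp (κ / L)) ^ L := by
          gcongr; rw [hρ]; linarith [Real.add_one_le_exp (κ / (L:ℝ))]
      _ = Real.exp κ := by
          rw [← Real.exp_nat_mul]; congr 1; field_simp
  constructor
  · intro i hi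
    refine mG _ _ _ ?_ (key i hi).1
    have := mul_le_mul_of_nonneg_left (hexp i hi) hN
    nlinarith [hM0 i]
  · intro i hi
    refine mD _ _ _ ?_ ((key L le_rfl).2 i hi)
    have := mul_le_mul_of_nonneg_left (hexp i hi.le) hN
    nlinarith [hM0 i]

lemma grid_lip (L : ℕ) (u : ℕ → ℝ) (c : ℝ) (n : ℕ)
    (h : ∀ i < n, |u (i+1) - u i| ≤ c / L) (i j : ℕ) (hi : i ≤ n) (hj : j ≤ n) :
    |u i - u j| ≤ c * |(i:ℝ) / L - (j:ℝ) / L| := by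
  have main : ∀ d i : ℕ, i + d ≤ n → |u (i + d) - u i| ≤ c / L * d := by
    intro d
    induction d with
    | zero => intro i _; simp
    | succ d ih =>
      intro i hi
      have h1 := ih i (by omega)
      have h2 := h (i+d) (by omega)
      have h3 : u (i + (d+1)) - u i = (u (i+d+1) - u (i+d)) + (u (i+d) - u i) := by
        rw [← add_assoc]; ring
      rw [h3]
      refine (abs_add_le _ _).trans ?_
      push_cast; linarith
  have w : ∀ i j : ℕ, j ≤ i → i ≤ n → |u i - u j| ≤ c * |(i:ℝ) / L - (j:ℝ) / L| := by
    intro i j hji hi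
    obtain ⟨d, rfl⟩ := Nat.exists_eq_add_of_le hji
    have := main d j hi
    have e : ((j + d : ℕ):ℝ) / L - (j:ℝ) / L = d / L := by push_cast; ring
    rw [e, abs_of_nonneg (by positivity : (0:ℝ) ≤ d / L)]
    calc _ ≤ _ := this
      _ = _ := by ring
  rcases le_total j i with h' | h'
  · exact w i j h' hi
  · rw [abs_sub_comm, abs_sub_comm ((i:ℝ)/L)]; exact w j i h' hj

lemma int_step (L : ℕ) (hL : 1 ≤ L) (h : ℝ → ℝ)
    (hc : ∀ m < L, ∀ q : ℝ, (m:ℝ) / L < q → q ≤ ((m:ℝ)+1) / L → h q = h (((m:ℝ)+1)/L)) :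
    ∫ q in Ioc (0:ℝ) 1, h q = 1 / (L:ℝ) * ∑ m ∈ Finset.range L, h (((m:ℝ)+1)/L) := by
  have hLp : (0:ℝ) < L := by exact_mod_cast hL
  have hle : ∀ m : ℕ, (m:ℝ)/L ≤ ((m+1:ℕ):ℝ)/L := fun m => by
    gcongr; simp
  have hEq : ∀ m < L, Set.EqOn (fun _ => h (((m:ℝ)+1)/L)) h (Set.uIoc ((m:ℝ)/L) (((m+1:ℕ):ℝ)/L)) := by
    intro m hm q hq
    rw [Set.uIoc_of_le (hle m)] at hq
    have h2 := hq.2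
    push_cast at h2
    exact (hc m hm q hq.1 h2).symm
  have hint : ∀ m < L, IntervalIntegrable h volume ((m:ℝ)/L) (((m+1:ℕ):ℝ)/L) := by
    intro m hm
    exact (intervalIntegrable_const (c := h (((m:ℝ)+1)/L))).congr (hEq m hm)
  have := intervalIntegral.sum_integral_adjacent_intervals (μ := volume) (f := h)
    (a := fun m : ℕ => (m:ℝ)/L) (n := L) (fun k hk => hint k hk)
  rw [← intervalIntegral.integral_of_le (by norm_num)]
  simp only [Nat.cast_zero, zero_div, div_self hLp.ne'] at this
  rw [← this, Finset.mul_sum]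
  refine Finset.sum_congr rfl fun m hm => ?_
  have hm' := Finset.mem_range.mp hm
  rw [intervalIntegral.integral_congr_ae (g := fun _ => h (((m:ℝ)+1)/L))
    (Filter.Eventually.of_forall fun q hq => (hEq m hm' hq).symm)]
  rw [intervalIntegral.integral_const, smul_eq_mul]
  push_cast
  ring

/-- A discrete, direction-independent view of one sweep: cells `m < L`, grid points `i ≤ L`. -/
structure TPView (T L : ℕ) (x : ℕ → ℝ) (F O : ℕ → ℤ → Bool → ℕ → ℕ → ℝ)
    (c : ℤ → ℤ → Bool → ℕ → ℝ) : Prop where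
  c_symm : ∀ t s b m, c t s b m = c s t b m
  c_base : ∀ b m, c (-1) (-1) b m = 1
  c_mixed : ∀ t : ℤ, 0 ≤ t → ∀ b m, c t (-1) b m = 0
  vF : ∀ (t : ℕ) (r : ℤ), (t : ℤ) < r → ∀ b i m, F t r b i m = 0
  vO : ∀ (t : ℕ) (r : ℤ), (t : ℤ) < r → ∀ b i m, O t r b i m = 0
  startval : ∀ t < T, ∀ r : ℤ, -1 ≤ r → r ≤ (t : ℤ) → ∀ b, ∀ m < L,
    F t r b 0 m = if r = -1 ∧ b = false then x t else 0
  step : ∀ t < T, ∀ r : ℤ, -1 ≤ r → r ≤ (t : ℤ) → ∀ b, ∀ i < L, ∀ m < L,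
    F t r b (i+1) m = F t r b i m + (if (t:ℤ) = r ∧ b = false ∧ i = m then 1 else 0)
      + (1 / (L:ℝ)) * ∑ s ∈ Finset.range t,
          O s r b (i+1) m * (F t (s:ℤ) true i i - c t s false i)
  cov : ∀ t < T, ∀ s ≤ t, ∀ i < L, c (t:ℤ) (s:ℤ) false i =
    ∑ t' ∈ Finset.Icc (-1 : ℤ) (t : ℤ), ∑ s' ∈ Finset.Icc (-1 : ℤ) (s : ℤ), ∑ b : Bool,
      (1 / (L:ℝ)) * ∑ m ∈ Finset.range L, F t t' b i m * c t' s' b m * F s s' b i m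

lemma avg_le (L : ℕ) (hL : 1 ≤ L) (g : ℕ → ℝ) (B : ℝ) (h : ∀ m < L, |g m| ≤ B) :
    |1 / (L:ℝ) * ∑ m ∈ Finset.range L, g m| ≤ B := by
  have hLp : (0:ℝ) < L := by exact_mod_cast hL
  rw [abs_mul, abs_of_pos (by positivity)]
  have h1 : |∑ m ∈ Finset.range L, g m| ≤ L * B := by
    refine (Finset.abs_sum_le_sum_abs _ _).trans ?_
    refine (Finset.sum_le_card_nsmul _ _ B fun m hm => h m (Finset.mem_range.mp hm)).trans ?_
    simp
  calc 1 / (L:ℝ) * |∑ m ∈ Finset.range L, g m| ≤ 1 / (L:ℝ) * (L * B) := by gcongr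
    _ = B := by field_simp

lemma triple_le (t s : ℕ) (hs : s ≤ t) (g : ℤ → ℤ → Bool → ℝ) (B : ℝ) (hB : 0 ≤ B)
    (h : ∀ t' s' : ℤ, -1 ≤ t' → t' ≤ t → -1 ≤ s' → s' ≤ s → ∀ b, |g t' s' b| ≤ B) :
    |∑ t' ∈ Finset.Icc (-1 : ℤ) (t : ℤ), ∑ s' ∈ Finset.Icc (-1 : ℤ) (s : ℤ), ∑ b : Bool, g t' s' b|
      ≤ 2 * ((t:ℝ) + 2) ^ 2 * B := by
  have hs' : (s:ℝ) ≤ t := by exact_mod_cast hs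
  have h1 : ∀ t' ∈ Finset.Icc (-1 : ℤ) (t : ℤ),
      |∑ s' ∈ Finset.Icc (-1 : ℤ) (s : ℤ), ∑ b : Bool, g t' s' b| ≤ ((t:ℝ)+2) * (2 * B) := by
    intro t' ht'
    rw [Finset.mem_Icc] at ht'
    refine (Finset.abs_sum_le_sum_abs _ _).trans ?_
    refine (Finset.sum_le_card_nsmul _ _ (2 * B) fun s' hs' => ?_).trans ?_
    · rw [Finset.mem_Icc] at hs'
      rw [Fintype.sum_bool]
      refine (abs_add_le _ _).trans ?_
      have := h t' s' ht'.1 ht'.2 hs'.1 hs'.2 true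
      have := h t' s' ht'.1 ht'.2 hs'.1 hs'.2 false
      linarith
    · rw [nsmul_eq_mul, Int.card_Icc]
      have : (((s:ℤ) + 1 - (-1)).toNat : ℝ) = s + 2 := by
        have : ((s:ℤ) + 1 - (-1)).toNat = s + 2 := by omega
        rw [this]; push_cast; ring
      rw [this]
      gcongr
  refine (Finset.abs_sum_le_sum_abs _ _).trans ?_
  refine (Finset.sum_le_card_nsmul _ _ _ h1).trans ?_
  rw [nsmul_eq_mul, Int.card_Icc]
  have : (((t:ℤ) + 1 - (-1)).toNat : ℝ) = t + 2 := by
    have : ((t:ℤ) + 1 - (-1)).toNat = t + 2 := by omega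
    rw [this]; push_cast; ring
  rw [this]
  apply le_of_eq; ring

lemma mul3 {a b c A B D : ℝ} (ha : |a| ≤ A) (hb : |b| ≤ B) (hc : |c| ≤ D) :
    |a * b * c| ≤ A * B * D := by
  have hA := (abs_nonneg a).trans ha
  have hB := (abs_nonneg b).trans hb
  rw [abs_mul, abs_mul]
  gcongr

namespace TPView

variable {T L : ℕ} {x : ℕ → ℝ} {F O : ℕ → ℤ → Bool → ℕ → ℕ → ℝ} {c : ℤ → ℤ → Bool → ℕ → ℝ}

lemma diag (v : TPView T L x F O c) (t : ℕ) (ht : t < T) (b : Bool) (i : ℕ) (hi : i ≤ L) (m : ℕ)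
    (hm : m < L) : F t t b i m = if b = false ∧ m < i then 1 else 0 := by
  induction i with
  | zero => rw [v.startval t ht t (by omega) le_rfl b m hm]; simp
  | succ i ih =>
    rw [v.step t ht t (by omega) le_rfl b i (by omega) m hm, ih (by omega),
      Finset.sum_eq_zero, mul_zero, add_zero]
    · cases b
      · rcases lt_trichotomy m i with h | h | h
        · have h1 : i ≠ m := by omega
          have h2 : m < i + 1 := by omega
          simp [h, h1, h2]
        · subst h; simp
        · have h1 : i ≠ m := by omega
          have h2 : ¬ m < i + 1 := by omega
          have h3 : ¬ m < i := by omega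
          simp [h1, h2, h3]
      · simp
    · intro s hs
      rw [v.vO s t (by exact_mod_cast Finset.mem_range.mp hs), zero_mul]

lemma diag_abs (v : TPView T L x F O c) (t : ℕ) (ht : t < T) (b : Bool) (i : ℕ) (hi : i ≤ L) (m : ℕ)
    (hm : m < L) : |F t t b i m| ≤ 1 := by
  rw [v.diag t ht b i hi m hm]; split_ifs <;> simp

/-- sum over past cells -/
lemma diag_sum (i : ℕ) (hi : i ≤ L) (g E : ℕ → ℝ) (A : ℝ)
    (hz : ∀ m < L, i ≤ m → g m = 0) (h : ∀ m < i, |g m| ≤ A * E m) :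
    |1 / (L:ℝ) * ∑ m ∈ Finset.range L, g m| ≤ A * (1 / (L:ℝ) * ∑ m ∈ Finset.range i, E m) := by
  have e : ∑ m ∈ Finset.range L, g m = ∑ m ∈ Finset.range i, g m := by
    symm
    apply Finset.sum_subset
    · intro m; simp only [Finset.mem_range]; omega
    · intro m h1 h2
      simp only [Finset.mem_range] at h1 h2
      exact hz m h1 (by omega)
  rw [e, abs_mul, abs_of_nonneg (by positivity : (0:ℝ) ≤ 1 / L)]
  calc _ ≤ 1 / (L:ℝ) * ∑ m ∈ Finset.range i, A * E m := by
        gcongr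
        refine (Finset.abs_sum_le_sum_abs _ _).trans ?_
        exact Finset.sum_le_sum fun m hm => h m (Finset.mem_range.mp hm)
    _ = _ := by rw [← Finset.mul_sum]; ring

/-- step bound -/
lemma stepF (v : TPView T L x F O c) (t : ℕ) (ht : t < T) (K B : ℝ) (hK : 0 ≤ K)
    (hO : ∀ s < t, ∀ r : ℤ, -1 ≤ r → ∀ b, ∀ i ≤ L, ∀ m < L, |O s r b i m| ≤ K)
    (i : ℕ) (hi : i < L)
    (hB : ∀ s : ℕ, s < t → |F t (s:ℤ) true i i - c t s false i| ≤ B)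
    (r : ℤ) (hr : -1 ≤ r) (hrt : r ≤ t) (b : Bool) (m : ℕ) (hm : m < L) :
    |F t r b (i+1) m - F t r b i m - (if (t:ℤ) = r ∧ b = false ∧ i = m then 1 else 0)|
      ≤ 1 / L * (t * (K * B)) := by
  rw [v.step t ht r hr hrt b i hi m hm]
  have : ∀ a b c : ℝ, a + b + c - a - b = c := by intros; ring
  rw [this, abs_mul, abs_of_nonneg (by positivity : (0:ℝ) ≤ 1 / L)]
  gcongr
  refine (Finset.abs_sum_le_sum_abs _ _).trans ?_
  refine (Finset.sum_le_card_nsmul _ _ (K * B) fun s hs => ?_).trans ?_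
  · have hs' := Finset.mem_range.mp hs
    rw [abs_mul]
    have h1 := hO s hs' r hr b (i+1) (by omega) m hm
    have h2 := hB s hs'
    gcongr
  · simp

/-- The constant produced by one sweep, first stage. -/
noncomputable def con1 (t : ℕ) (K : ℝ) : ℝ :=
  2 * (2 * ((t:ℝ)+2)^2 * K^2) * (K * Real.exp ((2 * ((t:ℝ)+2)^2 * K^2) * (1 + 2 * (2 * ((t:ℝ)+2)^2 * K^2))))

lemma bound1 (v : TPView T L x F O c) (hL : 1 ≤ L) (t : ℕ) (ht : t < T) (K : ℝ) (hK : 1 ≤ K)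
    (hx : |x t| ≤ K)
    (hF : ∀ s < t, ∀ r : ℤ, -1 ≤ r → ∀ b, ∀ i ≤ L, ∀ m < L, |F s r b i m| ≤ K)
    (hO : ∀ s < t, ∀ r : ℤ, -1 ≤ r → ∀ b, ∀ i ≤ L, ∀ m < L, |O s r b i m| ≤ K)
    (hc : ∀ t' s' : ℤ, -1 ≤ t' → -1 ≤ s' → t' < t → s' < t → ∀ b, ∀ m < L, |c t' s' b m| ≤ K) :
    (∀ i ≤ L, ∀ r : ℤ, -1 ≤ r → r < t → ∀ b, ∀ m < L, |F t r b i m| ≤ con1 t K) ∧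
    (∀ m < L, ∀ s : ℕ, s < t → |c t s false m| ≤ con1 t K) := by
  have hK2 : 1 ≤ 2 * ((t:ℝ)+2)^2 * K^2 := by
    have : (0:ℝ) ≤ t := by positivity
    nlinarith [mul_nonneg (mul_nonneg this this) (sq_nonneg K), mul_nonneg this (sq_nonneg K)]
  refine gron L hL (2 * ((t:ℝ)+2)^2 * K^2) K hK2 (by linarith)
    (fun i M => ∀ r : ℤ, -1 ≤ r → r < t → ∀ b, ∀ m < L, |F t r b i m| ≤ M)
    (fun m D => ∀ s : ℕ, s < t → |c t s false m| ≤ D)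
    (fun i x y hxy h r h1 h2 b m hm => (h r h1 h2 b m hm).trans hxy)
    (fun i x y hxy h s hs => (h s hs).trans hxy) ?_ ?_ ?_
  · intro r hr hrt b m hm
    rw [v.startval t ht r hr hrt.le b m hm]
    split_ifs
    · exact hx
    · simp; linarith
  · intro i hi M D hM hD hG hDD r hr hrt b m hm
    have h := v.stepF t ht K (M + D) (by linarith) hO i hi
      (fun s hs => (abs_sub _ _).trans (add_le_add (hG s (by omega) (by exact_mod_cast hs) true i hi) (hDD s hs)))
      r hr hrt.le b m hm
    rw [if_neg (by rintro ⟨h, -⟩; omega), sub_zero] at h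
    have h' := hG r hr hrt b m hm
    have e : F t r b (i+1) m = F t r b i m + (F t r b (i+1) m - F t r b i m) := by ring
    rw [e]
    refine (abs_add_le _ _).trans (add_le_add h' (h.trans ?_))
    have hMD : 0 ≤ M + D := by linarith
    calc 1 / (L:ℝ) * (t * (K * (M + D))) = (t * K) / L * (M + D) := by ring
      _ ≤ _ := by
        gcongr
        · have : (0:ℝ) ≤ t := by positivity
          nlinarith
        · nlinarith
  · intro i hi M E hM hE hG hDD s hs
    rw [v.cov t ht s hs.le i hi]
    have hS : 0 ≤ 1 / (L:ℝ) * ∑ m ∈ Finset.range i, E m :=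
      mul_nonneg (by positivity) (Finset.sum_nonneg fun m _ => hE m)
    refine (triple_le t s hs.le _ (K^2 * (M + 1 / (L:ℝ) * ∑ m ∈ Finset.range i, E m)) (by positivity) ?_).trans
      (le_of_eq (by ring))
    intro t' s' h1 h2 h3 h4 b
    rcases h2.lt_or_eq with h2 | h2
    · refine (avg_le L hL _ (M * K * K) ?_).trans ?_
      · intro m hm
        exact mul3 (hG t' h1 h2 b m hm) (hc t' s' h1 h3 h2 (by omega) b m hm)
          (hF s hs s' h3 b i hi.le m hm)
      · have : 0 ≤ K^2 * (1 / (L:ℝ) * ∑ m ∈ Finset.range i, E m) := by positivity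
        nlinarith
    · subst h2
      refine (diag_sum i hi.le _ E K ?_ ?_).trans ?_
      · intro m hm him
        rw [v.diag t ht b i hi.le m hm, if_neg (by omega)]; ring
      · intro m hm
        have hml : m < L := by omega
        have h5 := hF s hs s' h3 b i hi.le m hml
        cases b with
        | true =>
          rw [v.diag t ht true i hi.le m hml, if_neg (by simp)]
          simp only [zero_mul, abs_zero]
          exact mul_nonneg (by linarith) (hE m)
        | false =>
          have h6 : |c t s' false m| ≤ E m := by
            rcases h3.lt_or_eq with h3 | h3
            · lift s' to ℕ using (by omega)
              exact hDD m hm s' (by omega)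
            · rw [← h3, v.c_mixed t (by omega)]; simpa using hE m
          exact (mul3 (v.diag_abs t ht false i hi.le m hml) h6 h5).trans (le_of_eq (by ring))
      · have : 0 ≤ K^2 * M := by positivity
        have : K * (1 / (L:ℝ) * ∑ m ∈ Finset.range i, E m) ≤ K^2 * (1 / (L:ℝ) * ∑ m ∈ Finset.range i, E m) := by
          gcongr; nlinarith
        linarith

/-- The constant of the second stage. -/
noncomputable def con2 (t : ℕ) (K : ℝ) : ℝ :=
  2 * (2 * ((t:ℝ)+2)^2 * K^3) * (1 * Real.exp ((2 * ((t:ℝ)+2)^2 * K^3) * (1 + 2 * (2 * ((t:ℝ)+2)^2 * K^3))))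

lemma bound2 (v : TPView T L x F O c) (hL : 1 ≤ L) (t : ℕ) (ht : t < T) (K : ℝ) (hK : 1 ≤ K)
    (hF : ∀ r : ℤ, -1 ≤ r → ∀ b, ∀ i ≤ L, ∀ m < L, |F t r b i m| ≤ K)
    (hc : ∀ t' s' : ℤ, -1 ≤ t' → -1 ≤ s' → t' < t → s' < t → ∀ b, ∀ m < L, |c t' s' b m| ≤ K)
    (hc' : ∀ s : ℤ, -1 ≤ s → s < t → ∀ m < L, |c t s false m| ≤ K) :
    ∀ m < L, |c t t false m| ≤ con2 t K := by
  have hK3 : 1 ≤ K^3 := one_le_pow₀ hK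
  have hK2 : 1 ≤ 2 * ((t:ℝ)+2)^2 * K^3 := by
    have : (0:ℝ) ≤ t := by positivity
    have : 1 ≤ 2 * ((t:ℝ)+2)^2 := by nlinarith
    nlinarith
  refine (gron L hL (2 * ((t:ℝ)+2)^2 * K^3) 1 hK2 (by linarith)
    (fun i M => 1 ≤ M) (fun m D => |c t t false m| ≤ D)
    (fun i x y hxy h => h.trans hxy)
    (fun i x y hxy h => h.trans hxy) le_rfl ?_ ?_).2
  · intro i hi M D hM hD hG hDD
    have : 0 ≤ (2 * ((t:ℝ)+2)^2 * K^3) / L * (M + D) := by positivity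
    linarith
  · intro i hi M E hM hE hG hDD
    rw [v.cov t ht t le_rfl i hi]
    have hS : 0 ≤ 1 / (L:ℝ) * ∑ m ∈ Finset.range i, E m :=
      mul_nonneg (by positivity) (Finset.sum_nonneg fun m _ => hE m)
    refine (triple_le t t le_rfl _ (K^3 * (M + 1 / (L:ℝ) * ∑ m ∈ Finset.range i, E m)) (by positivity) ?_).trans
      (le_of_eq (by ring))
    intro t' s' h1 h2 h3 h4 b
    by_cases hb : b = true ∧ (t' = t ∨ s' = t)
    · rw [Finset.sum_eq_zero]
      · rw [mul_zero, abs_zero]; positivity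
      · intro m hm
        have hml := Finset.mem_range.mp hm
        obtain ⟨rfl, rfl | rfl⟩ := hb
        · rw [v.diag t ht true i hi.le m hml, if_neg (by simp)]; simp
        · rw [v.diag t ht true i hi.le m hml, if_neg (by simp)]; simp
    by_cases htt : t' = t ∧ s' = t
    · obtain ⟨rfl, rfl⟩ := htt
      have hbf : b = false := by cases b <;> simp_all
      subst hbf
      refine (diag_sum i hi.le _ E 1 ?_ ?_).trans ?_
      · intro m hm him
        rw [v.diag t ht false i hi.le m hm, if_neg (by omega)]; ring
      · intro m hm
        have hml : m < L := by omega
        exact (mul3 (v.diag_abs t ht false i hi.le m hml) (hDD m hm)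
          (v.diag_abs t ht false i hi.le m hml)).trans (le_of_eq (by ring))
      · nlinarith
    · refine (avg_le L hL _ (K * K * K) ?_).trans ?_
      · intro m hm
        refine mul3 (hF t' h1 b i hi.le m hm) ?_ (hF s' h3 b i hi.le m hm)
        by_cases h5 : t' = t
        · have hbf : b = false := by cases b <;> simp_all
          subst hbf h5
          exact hc' s' h3 (by omega) m hm
        · by_cases h6 : s' = t
          · have hbf : b = false := by cases b <;> simp_all
            subst hbf h6
            rw [v.c_symm]
            exact hc' t' h1 (by omega) m hm
          · exact hc t' s' h1 h3 (by omega) (by omega) b m hm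
      · nlinarith

/-- Combined sweep bound. -/
lemma bound (K : ℝ) (hK : 1 ≤ K) (t : ℕ) : ∃ K' : ℝ, K ≤ K' ∧
    ∀ (T L : ℕ) (x : ℕ → ℝ) (F O : ℕ → ℤ → Bool → ℕ → ℕ → ℝ) (c : ℤ → ℤ → Bool → ℕ → ℝ),
    TPView T L x F O c → 1 ≤ L → t < T → |x t| ≤ K →
    (∀ s < t, ∀ r : ℤ, -1 ≤ r → ∀ b, ∀ i ≤ L, ∀ m < L, |F s r b i m| ≤ K) →
    (∀ s < t, ∀ r : ℤ, -1 ≤ r → ∀ b, ∀ i ≤ L, ∀ m < L, |O s r b i m| ≤ K) →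
    (∀ t' s' : ℤ, -1 ≤ t' → -1 ≤ s' → t' < t → s' < t → ∀ b, ∀ m < L, |c t' s' b m| ≤ K) →
    (∀ r : ℤ, -1 ≤ r → ∀ b, ∀ i ≤ L, ∀ m < L, |F t r b i m| ≤ K') ∧
    (∀ s : ℤ, -1 ≤ s → s ≤ t → ∀ m < L, |c t s false m| ≤ K') := by
  set K1 := max K (con1 t K) with hK1
  have hKK1 : K ≤ K1 := le_max_left _ _
  refine ⟨max K1 (con2 t K1), hKK1.trans (le_max_left _ _), ?_⟩
  intro T L x F O c v hL ht hx hF hO hc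
  obtain ⟨b1, b2⟩ := v.bound1 hL t ht K hK hx hF hO hc
  have hF1 : ∀ r : ℤ, -1 ≤ r → ∀ b, ∀ i ≤ L, ∀ m < L, |F t r b i m| ≤ K1 := by
    intro r hr b i hi m hm
    rcases lt_trichotomy r t with h | h | h
    · exact (b1 i hi r hr h b m hm).trans (le_max_right _ _)
    · subst h; exact (v.diag_abs t ht b i hi m hm).trans (hK.trans hKK1)
    · rw [v.vF t r h]; simp; linarith
  have hc1 : ∀ s : ℤ, -1 ≤ s → s < t → ∀ m < L, |c t s false m| ≤ K1 := by
    intro s hs hst m hm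
    rcases hs.lt_or_eq with h3 | h3
    · lift s to ℕ using (by omega)
      exact (b2 m hm s (by omega)).trans (le_max_right _ _)
    · rw [← h3, v.c_mixed t (by omega)]; simp; linarith
  refine ⟨fun r hr b i hi m hm => (hF1 r hr b i hi m hm).trans (le_max_left _ _), ?_⟩
  intro s hs hst m hm
  rcases hst.lt_or_eq with h | h
  · exact (hc1 s hs h m hm).trans (le_max_left _ _)
  · subst h
    exact (v.bound2 hL t ht K1 (hK.trans hKK1) hF1
      (fun t' s' h1 h2 h3 h4 b m hm => (hc t' s' h1 h2 h3 h4 b m hm).trans hKK1) hc1 m hm).trans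
      (le_max_right _ _)

/-- Lipschitz estimates from bounds. -/
lemma lip (v : TPView T L x F O c) (hL : 1 ≤ L) (K : ℝ) (hK : 1 ≤ K)
    (hF : ∀ s < T, ∀ r : ℤ, -1 ≤ r → ∀ b, ∀ i ≤ L, ∀ m < L, |F s r b i m| ≤ K)
    (hO : ∀ s < T, ∀ r : ℤ, -1 ≤ r → ∀ b, ∀ i ≤ L, ∀ m < L, |O s r b i m| ≤ K)
    (hc : ∀ t' s' : ℤ, -1 ≤ t' → -1 ≤ s' → t' < T → s' < T → ∀ b, ∀ m < L, |c t' s' b m| ≤ K)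
    (t : ℕ) (ht : t < T) :
    (∀ r : ℤ, -1 ≤ r → r < t → ∀ b, ∀ m < L, ∀ i < L,
      |F t r b (i+1) m - F t r b i m| ≤ (T * (K * (2 * K))) / L) ∧
    (∀ s : ℕ, s < t → ∀ i, i + 1 < L → |c t s false (i+1) - c t s false i| ≤
      (2 * ((T:ℝ)+2)^2 * (2 * K^2 * (T * (K * (2 * K)) + 1))) / L) := by
  have hLp : (0:ℝ) < L := by exact_mod_cast hL
  have st : ∀ s < T, ∀ r : ℤ, -1 ≤ r → r ≤ s → ∀ b, ∀ i < L, ∀ m < L,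
      |F s r b (i+1) m - F s r b i m - (if (s:ℤ) = r ∧ b = false ∧ i = m then 1 else 0)|
      ≤ (T * (K * (2 * K))) / L := by
    intro s hs r hr hrs b i hi m hm
    have h := v.stepF s hs K (2*K) (by linarith)
      (fun s' hs' => hO s' (by omega)) i hi
      (fun s' hs' => (abs_sub _ _).trans ((add_le_add (hF s hs s' (by omega) true i hi.le i hi)
        (hc s s' (by omega) (by omega) (by omega) (by omega) false i hi)).trans (le_of_eq (by ring))))
      r hr hrs b m hm
    refine h.trans ?_
    have : (s:ℝ) ≤ T := by exact_mod_cast hs.le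
    rw [one_div, div_eq_inv_mul]
    gcongr
  constructor
  · intro r hr hrt b m hm i hi
    have h := st t ht r hr hrt.le b i hi m hm
    rwa [if_neg (by rintro ⟨h, -⟩; omega), sub_zero] at h
  · intro s hs i hi
    rw [v.cov t ht s hs.le (i+1) hi, v.cov t ht s hs.le i (by omega)]
    simp only [← Finset.sum_sub_distrib, ← mul_sub]
    set A : ℝ := (T * (K * (2 * K))) with hA
    have hA0 : 0 ≤ A := by positivity
    refine (triple_le t s hs.le _ (2 * K^2 * (A + 1) / L) (by positivity) ?_).trans ?_
    · intro t' s' h1 h2 h3 h4 b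
      have hd : ∀ u < T, ∀ r : ℤ, -1 ≤ r → r ≤ u → ∀ m < L,
          |F u r b (i+1) m - F u r b i m| ≤ A / L + (if i = m then 1 else 0) := by
        intro u hu r hr hru m hm
        have h := st u hu r hr hru b i (by omega) m hm
        have e : F u r b (i+1) m - F u r b i m =
          (F u r b (i+1) m - F u r b i m - (if (u:ℤ) = r ∧ b = false ∧ i = m then 1 else 0)) +
          (if (u:ℤ) = r ∧ b = false ∧ i = m then 1 else 0) := by ring
        rw [e]
        refine (abs_add_le _ _).trans (add_le_add h ?_)
        split_ifs with h7 h8 h8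
        · simp
        · exact absurd h7.2.2 h8
        · simp
        · simp
      rw [abs_mul, abs_of_nonneg (by positivity : (0:ℝ) ≤ 1 / L)]
      have hsum : |∑ m ∈ Finset.range L, (F t t' b (i+1) m * c t' s' b m * F s s' b (i+1) m -
          F t t' b i m * c t' s' b m * F s s' b i m)| ≤ 2 * K^2 * (A + 1) := by
        refine (Finset.abs_sum_le_sum_abs _ _).trans ?_
        have hb : ∀ m ∈ Finset.range L, |F t t' b (i+1) m * c t' s' b m * F s s' b (i+1) m -
          F t t' b i m * c t' s' b m * F s s' b i m| ≤ 2 * K^2 * (A / L + (if i = m then 1 else 0)) := by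
          intro m hm
          have hm' := Finset.mem_range.mp hm
          have hcm := hc t' s' h1 h3 (by omega) (by omega) b m hm'
          have e : F t t' b (i+1) m * c t' s' b m * F s s' b (i+1) m -
            F t t' b i m * c t' s' b m * F s s' b i m =
            (F t t' b (i+1) m - F t t' b i m) * c t' s' b m * F s s' b (i+1) m +
            F t t' b i m * c t' s' b m * (F s s' b (i+1) m - F s s' b i m) := by ring
          rw [e]
          refine (abs_add_le _ _).trans ((add_le_add
            (mul3 (hd t ht t' h1 h2 m hm') hcm (hF s (by omega) s' h3 b (i+1) (by omega) m hm'))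
            (mul3 (hF t ht t' h1 b i (by omega) m hm') hcm (hd s (by omega) s' h3 h4 m hm'))).trans
            (le_of_eq (by ring)))
        refine (Finset.sum_le_sum hb).trans ?_
        rw [← Finset.mul_sum, Finset.sum_add_distrib, Finset.sum_const, Finset.card_range,
          Finset.sum_ite_eq, if_pos (Finset.mem_range.mpr (by omega)), nsmul_eq_mul]
        apply le_of_eq; field_simp
      calc 1 / (L:ℝ) * _ ≤ 1 / (L:ℝ) * (2 * K^2 * (A + 1)) := by gcongr
        _ = _ := by ring
    · have : (t:ℝ) ≤ T := by exact_mod_cast ht.le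
      refine le_trans ?_ (le_of_eq (mul_div_assoc _ _ _).symm)
      gcongr

end TPView

namespace IsLinearTP

variable {T L : ℕ} {ξ : ℕ → ℝ} {ℓ' : ℕ → ℝ → ℝ} {Γ : ℕ → ℤ → Bool → Bool → ℝ → ℝ → ℝ}
  {C : ℤ → ℤ → Bool → ℝ → ℝ} {f χ : ℕ → ℝ}

lemma fstep (h : IsLinearTP T L ξ ℓ' Γ C f χ) (hL : 1 ≤ L) (t : ℕ) (ht : t < T) (i : ℕ) (hi : i < L)
    (r : ℤ) (hr : -1 ≤ r) (hrt : r ≤ t) (b : Bool) (q : ℝ) (hq0 : 0 < q) (hq1 : q ≤ 1) :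
    Γ t r false b (((i:ℝ)+1)/L) q = Γ t r false b ((i:ℝ)/L) q
      + (if (t:ℤ) = r ∧ b = false ∧ (i:ℤ)+1 = ⌈(L:ℝ)*q⌉ then 1 else 0)
      + (1 / (L:ℝ)) * ∑ s ∈ Finset.range t, Γ s r true b (((i:ℝ)+1)/L) q *
        (Γ t (s:ℤ) false true ((i:ℝ)/L) (((i:ℝ)+1)/L) - C t s false (((i:ℝ)+1)/L)) := by
  have hLp : (0:ℝ) < L := by exact_mod_cast hL
  have := h.fwd_step t ht (i+1) (by omega) (by omega) r hr hrt b (((i:ℝ)+1)/L) q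
    (by push_cast; gcongr; linarith) (by push_cast; exact le_rfl) hq0 hq1
  push_cast at this
  rw [add_sub_cancel_right] at this
  exact this

lemma bstep (h : IsLinearTP T L ξ ℓ' Γ C f χ) (hL : 1 ≤ L) (t : ℕ) (ht : t < T) (i : ℕ) (hi : i < L)
    (r : ℤ) (hr : -1 ≤ r) (hrt : r ≤ t) (b : Bool) (q : ℝ) (hq0 : 0 < q) (hq1 : q ≤ 1) :
    Γ t r true b ((i:ℝ)/L) q = Γ t r true b (((i:ℝ)+1)/L) q
      + (if (t:ℤ) = r ∧ b = true ∧ (i:ℤ)+1 = ⌈(L:ℝ)*q⌉ then 1 else 0)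
      + (1 / (L:ℝ)) * ∑ s ∈ Finset.range t, Γ s r false b ((i:ℝ)/L) q *
        (Γ t (s:ℤ) true false (((i:ℝ)+1)/L) (((i:ℝ)+1)/L) - C t s true (((i:ℝ)+1)/L)) := by
  have hLp : (0:ℝ) < L := by exact_mod_cast hL
  have := h.bwd_step t ht (i+1) (by omega) (by omega) r hr hrt b ((i:ℝ)/L) q
    (by push_cast; gcongr; linarith) (by push_cast; rw [add_sub_cancel_right]) (by positivity) hq0 hq1
  push_cast at this
  rw [add_sub_cancel_right] at this
  exact this

lemma ceil_cell (hL : 1 ≤ L) (m : ℕ) (q : ℝ) (h1 : (m:ℝ)/L < q) (h2 : q ≤ ((m:ℝ)+1)/L) :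
    ⌈(L:ℝ)*q⌉ = (m:ℤ) + 1 := by
  have hLp : (0:ℝ) < L := by exact_mod_cast hL
  rw [div_lt_iff₀ hLp] at h1
  rw [le_div_iff₀ hLp] at h2
  rw [Int.ceil_eq_iff]
  push_cast
  constructor <;> linarith

lemma cell_pos (hL : 1 ≤ L) (m : ℕ) (hm : m < L) (q : ℝ) (h1 : (m:ℝ)/L < q)
    (h2 : q ≤ ((m:ℝ)+1)/L) : 0 < q ∧ q ≤ 1 := by
  have hLp : (0:ℝ) < L := by exact_mod_cast hL
  have h3 : (0:ℝ) ≤ (m:ℝ)/L := by positivity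
  have h4 : ((m:ℝ)+1)/L ≤ 1 := by
    rw [div_le_one hLp]; exact_mod_cast hm
  exact ⟨by linarith, by linarith⟩

lemma cell_lt (hL : 1 ≤ L) (m : ℕ) : (m:ℝ)/L < ((m:ℝ)+1)/L := by
  have hLp : (0:ℝ) < L := by exact_mod_cast hL
  gcongr; linarith

lemma qconst (h : IsLinearTP T L ξ ℓ' Γ C f χ) (hL : 1 ≤ L) (m : ℕ) (hm : m < L) (q : ℝ)
    (h1 : (m:ℝ)/L < q) (h2 : q ≤ ((m:ℝ)+1)/L) (t : ℕ) : t < T → ∀ r : ℤ, -1 ≤ r → ∀ a b : Bool,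
    ∀ i ≤ L, Γ t r a b ((i:ℝ)/L) q = Γ t r a b ((i:ℝ)/L) (((m:ℝ)+1)/L) := by
  have hLp : (0:ℝ) < L := by exact_mod_cast hL
  obtain ⟨hq0, hq1⟩ := cell_pos hL m hm q h1 h2
  obtain ⟨hp0, hp1⟩ := cell_pos hL m hm _ (cell_lt hL m) le_rfl
  have c1 := ceil_cell hL m q h1 h2
  have c2 := ceil_cell hL m _ (cell_lt hL m) le_rfl
  induction t using Nat.strong_induction_on with
  | _ t ih =>
    intro ht r hr a b
    by_cases hrt : r ≤ t
    swap
    · intro i hi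
      rw [h.Γ_vanish t r (by omega), h.Γ_vanish t r (by omega)]
    cases a with
    | false =>
      intro i
      induction i with
      | zero =>
        intro _
        simp only [Nat.cast_zero, zero_div]
        rw [h.fwd_init t ht r hr hrt b q hq0 hq1, h.fwd_init t ht r hr hrt b _ hp0 hp1]
      | succ i ih2 =>
        intro hi
        have h3 : ∀ s ∈ Finset.range t, Γ s r true b (((i:ℝ)+1)/L) q
            = Γ s r true b (((i:ℝ)+1)/L) (((m:ℝ)+1)/L) := by
          intro s hs
          have hs := Finset.mem_range.mp hs
          have := ih s hs (by omega) r hr true b (i+1) hi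
          push_cast at this
          exact this
        push_cast
        rw [h.fstep hL t ht i (by omega) r hr hrt b q hq0 hq1,
          h.fstep hL t ht i (by omega) r hr hrt b _ hp0 hp1, ih2 (by omega), c1, c2]
        congr 2
        exact Finset.sum_congr rfl fun s hs => by rw [h3 s hs]
    | true =>
      have key : ∀ j i : ℕ, i + j = L → Γ t r true b ((i:ℝ)/L) q
          = Γ t r true b ((i:ℝ)/L) (((m:ℝ)+1)/L) := by
        intro j
        induction j with
        | zero =>
          intro i hi
          have : i = L := by omega
          rw [this, div_self hLp.ne', h.bwd_init t ht r hr hrt b q hq0 hq1,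
            h.bwd_init t ht r hr hrt b _ hp0 hp1]
        | succ j ih2 =>
          intro i hi
          have h4 := ih2 (i+1) (by omega)
          push_cast at h4
          rw [h.bstep hL t ht i (by omega) r hr hrt b q hq0 hq1,
            h.bstep hL t ht i (by omega) r hr hrt b _ hp0 hp1, h4, c1, c2]
          congr 2
          refine Finset.sum_congr rfl fun s hs => ?_
          have hs := Finset.mem_range.mp hs
          rw [ih s hs (by omega) r hr false b i (by omega)]
      intro i hi
      exact key (L - i) i (by omega)

lemma Cconst (h : IsLinearTP T L ξ ℓ' Γ C f χ) (hL : 1 ≤ L) (m : ℕ) (hm : m < L) (q : ℝ)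
    (h1 : (m:ℝ)/L < q) (h2 : q ≤ ((m:ℝ)+1)/L) (t s : ℤ) (ht : -1 ≤ t) (hs : -1 ≤ s)
    (htT : t < T) (hsT : s < T) (b : Bool) : C t s b q = C t s b (((m:ℝ)+1)/L) := by
  wlog hst : s ≤ t generalizing t s
  · rw [h.C_symm t s, h.C_symm t s]
    exact this s t hs ht hsT htT (by omega)
  rcases hs.lt_or_eq with hs | hs
  · lift s to ℕ using (by omega)
    lift t to ℕ using (by omega)
    have hq : ∀ q : ℝ, (m:ℝ)/L < q → q ≤ ((m:ℝ)+1)/L →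
        (((m+1:ℕ):ℝ) - 1)/L < q ∧ q ≤ ((m+1:ℕ):ℝ)/L := by
      intro q h1 h2
      push_cast
      rw [add_sub_cancel_right]
      exact ⟨h1, h2⟩
    have ha := hq q h1 h2
    have hb := hq _ (cell_lt hL m) le_rfl
    cases b with
    | false =>
      rw [h.fwd_C t (by omega) s (by omega) (m+1) (by omega) (by omega) q ha.1 ha.2,
        h.fwd_C t (by omega) s (by omega) (m+1) (by omega) (by omega) _ hb.1 hb.2]
    | true =>
      rw [h.bwd_C t (by omega) s (by omega) (m+1) (by omega) (by omega) q ha.1 ha.2,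
        h.bwd_C t (by omega) s (by omega) (m+1) (by omega) (by omega) _ hb.1 hb.2]
  · subst hs
    rcases ht.lt_or_eq with ht | ht
    · rw [h.C_mixed t (by omega), h.C_mixed t (by omega)]
    · subst ht
      rw [h.C_base, h.C_base]

lemma cov_int (h : IsLinearTP T L ξ ℓ' Γ C f χ) (hL : 1 ≤ L) (t s : ℕ) (ht : t < T) (hs : s < T)
    (t' s' : ℤ) (h1 : -1 ≤ t') (h2 : -1 ≤ s') (h3 : t' ≤ t) (h4 : s' ≤ s) (a b : Bool)
    (i : ℕ) (hi : i ≤ L) :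
    ∫ q in Ioc (0 : ℝ) 1, Γ t t' a b ((i:ℝ)/L) q * C t' s' b q * Γ s s' a b ((i:ℝ)/L) q
    = 1 / (L:ℝ) * ∑ m ∈ Finset.range L, Γ t t' a b ((i:ℝ)/L) (((m:ℝ)+1)/L) *
      C t' s' b (((m:ℝ)+1)/L) * Γ s s' a b ((i:ℝ)/L) (((m:ℝ)+1)/L) := by
  apply int_step L hL
  intro m hm q hq1 hq2
  rw [h.qconst hL m hm q hq1 hq2 t ht t' h1 a b i hi, h.qconst hL m hm q hq1 hq2 s hs s' h2 a b i hi,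
    h.Cconst hL m hm q hq1 hq2 t' s' h1 h2 (by omega) (by omega)]

lemma fview (h : IsLinearTP T L ξ ℓ' Γ C f χ) (hL : 1 ≤ L) :
    TPView T L ξ (fun t r b i m => Γ t r false b ((i:ℝ)/L) (((m:ℝ)+1)/L))
      (fun t r b i m => Γ t r true b ((i:ℝ)/L) (((m:ℝ)+1)/L))
      (fun t s b m => C t s b (((m:ℝ)+1)/L)) where
  c_symm t s b m := h.C_symm _ _ _ _
  c_base b m := h.C_base _ _
  c_mixed t ht b m := h.C_mixed t ht _ _
  vF t r hr b i m := h.Γ_vanish t r hr _ _ _ _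
  vO t r hr b i m := h.Γ_vanish t r hr _ _ _ _
  startval t ht r hr hrt b m hm := by
    obtain ⟨hp0, hp1⟩ := cell_pos hL m hm _ (cell_lt hL m) le_rfl
    simp only [Nat.cast_zero, zero_div]
    exact h.fwd_init t ht r hr hrt b _ hp0 hp1
  step t ht r hr hrt b i hi m hm := by
    obtain ⟨hp0, hp1⟩ := cell_pos hL m hm _ (cell_lt hL m) le_rfl
    have := h.fstep hL t ht i hi r hr hrt b _ hp0 hp1
    rw [ceil_cell hL m _ (cell_lt hL m) le_rfl] at this
    push_cast
    rw [this]
    have e : ((i:ℤ)+1 = (m:ℤ)+1) ↔ i = m := by omega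
    simp only [e]
  cov t ht s hs i hi := by
    rw [h.fwd_C t ht s hs (i+1) (by omega) (by omega) _ (by push_cast; rw [add_sub_cancel_right]; exact cell_lt hL i)
      (by push_cast; exact le_rfl)]
    push_cast
    rw [add_sub_cancel_right]
    refine Finset.sum_congr rfl fun t' ht' => Finset.sum_congr rfl fun s' hs' =>
      Finset.sum_congr rfl fun b _ => ?_
    rw [Finset.mem_Icc] at ht' hs'
    exact h.cov_int hL t s ht (by omega) t' s' ht'.1 hs'.1 ht'.2 hs'.2 false b i hi.le

lemma bview (h : IsLinearTP T L ξ ℓ' Γ C f χ) (hL : 1 ≤ L) :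
    TPView T L χ
      (fun t r b i m => Γ t r true (!b) (((L - i : ℕ):ℝ)/L) ((((L - 1 - m : ℕ):ℝ)+1)/L))
      (fun t r b i m => Γ t r false (!b) (((L - i : ℕ):ℝ)/L) ((((L - 1 - m : ℕ):ℝ)+1)/L))
      (fun t s b m => C t s (!b) ((((L - 1 - m : ℕ):ℝ)+1)/L)) where
  c_symm t s b m := h.C_symm _ _ _ _
  c_base b m := h.C_base _ _
  c_mixed t ht b m := h.C_mixed t ht _ _
  vF t r hr b i m := h.Γ_vanish t r hr _ _ _ _
  vO t r hr b i m := h.Γ_vanish t r hr _ _ _ _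
  startval t ht r hr hrt b m hm := by
    have hLp : (0:ℝ) < L := by exact_mod_cast hL
    obtain ⟨hp0, hp1⟩ := cell_pos hL (L-1-m) (by omega) _ (cell_lt hL (L-1-m)) le_rfl
    simp only [Nat.sub_zero, div_self hLp.ne']
    rw [h.bwd_init t ht r hr hrt (!b) _ hp0 hp1]
    simp
  step t ht r hr hrt b i hi m hm := by
    obtain ⟨hp0, hp1⟩ := cell_pos hL (L-1-m) (by omega) _ (cell_lt hL (L-1-m)) le_rfl
    have := h.bstep hL t ht (L-1-i) (by omega) r hr hrt (!b) _ hp0 hp1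
    rw [ceil_cell hL (L-1-m) _ (cell_lt hL (L-1-m)) le_rfl] at this
    have e1 : L - (i+1) = L-1-i := by omega
    have e2 : ((L - i : ℕ):ℝ) = ((L-1-i : ℕ):ℝ) + 1 := by
      have : L - i = (L-1-i) + 1 := by omega
      rw [this]; push_cast; ring
    simp only [e1, e2]
    rw [this]
    have e : (((L-1-i:ℕ):ℤ)+1 = ((L-1-m:ℕ):ℤ)+1) ↔ i = m := by omega
    have e' : ((!b) = true) ↔ b = false := by cases b <;> simp
    simp only [e, e', Bool.not_true, Bool.not_false]
  cov t ht s hs i hi := by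
    simp only [Bool.not_false]
    rw [h.bwd_C t ht s hs (L-1-i+1) (by omega) (by omega) _
      (by push_cast; rw [add_sub_cancel_right]; exact cell_lt hL _)
      (by push_cast; exact le_rfl)]
    have e2 : L-1-i+1 = L - i := by omega
    rw [e2]
    refine Finset.sum_congr rfl fun t' ht' => Finset.sum_congr rfl fun s' hs' => ?_
    rw [Finset.mem_Icc] at ht' hs'
    have hb : ∀ b : Bool, _ := fun b => h.cov_int hL t s ht (by omega) t' s' ht'.1 hs'.1 ht'.2 hs'.2 true b (L-i) (by omega)
    rw [Fintype.sum_bool, Fintype.sum_bool, hb, hb, add_comm]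
    simp only [Bool.not_false, Bool.not_true]
    congr 1
    · rw [← Finset.sum_range_reflect]
    · rw [← Finset.sum_range_reflect]

end IsLinearTP

/-- Uniform bounds up to time `n`. -/
def TPBd (L n : ℕ) (Γ : ℕ → ℤ → Bool → Bool → ℝ → ℝ → ℝ) (C : ℤ → ℤ → Bool → ℝ → ℝ) (K : ℝ) :
    Prop :=
  (∀ s < n, ∀ r : ℤ, -1 ≤ r → ∀ a b, ∀ i ≤ L, ∀ m < L,
    |Γ s r a b ((i:ℝ)/L) (((m:ℝ)+1)/L)| ≤ K) ∧
  (∀ t s : ℤ, -1 ≤ t → -1 ≤ s → t < n → s < n → ∀ b, ∀ m < L, |C t s b (((m:ℝ)+1)/L)| ≤ K)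

lemma TP_bounds (T : ℕ) (ξ : ℕ → ℝ) (ℓ' : ℕ → ℝ → ℝ)
    (hcont : ∀ t : ℕ, Continuous (ℓ' t))
    (Γ : ℕ → ℕ → ℤ → Bool → Bool → ℝ → ℝ → ℝ)
    (C : ℕ → ℤ → ℤ → Bool → ℝ → ℝ)
    (f χ : ℕ → ℕ → ℝ)
    (hTP : ∀ L : ℕ, 1 ≤ L → IsLinearTP T L ξ ℓ' (Γ L) (C L) (f L) (χ L)) (n : ℕ) (hn : n ≤ T) :
    ∃ K : ℝ, 1 ≤ K ∧ ∀ L, 1 ≤ L → TPBd L n (Γ L) (C L) K := by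
  induction n with
  | zero =>
    refine ⟨1, le_rfl, fun L hL => ⟨fun s hs => by omega, ?_⟩⟩
    intro t s h1 h2 h3 h4 b m hm
    have ht : t = -1 := by simp at h3; omega
    have hs : s = -1 := by simp at h4; omega
    subst ht hs
    rw [(hTP L hL).C_base]; simp
  | succ n ih =>
    obtain ⟨K0, hK0, hB0⟩ := ih (by omega)
    set K1 := max K0 |ξ n| with hK1
    have h01 : K0 ≤ K1 := le_max_left _ _
    obtain ⟨K2, h12, hK2⟩ := TPView.bound K1 (hK0.trans h01) n
    obtain ⟨X, hX⟩ := (isCompact_Icc (a := -K2) (b := K2)).exists_bound_of_continuousOn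
      (hcont n).continuousOn
    set K3 := max K2 X with hK3
    have h23 : K2 ≤ K3 := le_max_left _ _
    have hK3' : 1 ≤ K3 := ((hK0.trans h01).trans h12).trans h23
    obtain ⟨K4, h34, hK4⟩ := TPView.bound K3 hK3' n
    have h02 : K0 ≤ K2 := h01.trans h12
    have h03 : K0 ≤ K3 := h02.trans h23
    have h04 : K0 ≤ K4 := h03.trans h34
    refine ⟨K4, hK0.trans h04, fun L hL => ?_⟩
    have hLp : (0:ℝ) < L := by exact_mod_cast hL
    have h := hTP L hL
    obtain ⟨bG, bC⟩ := hB0 L hL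
    obtain ⟨fG, fC⟩ := hK2 T L _ _ _ _ (h.fview hL) hL (by omega) (le_max_right _ _)
      (fun s hs r hr b i hi m hm => (bG s hs r hr false b i hi m hm).trans h01)
      (fun s hs r hr b i hi m hm => (bG s hs r hr true b i hi m hm).trans h01)
      (fun t s h1 h2 h3 h4 b m hm => (bC t s h1 h2 h3 h4 b m hm).trans h01)
    have hf : |f L n| ≤ K2 := by
      rw [h.f_def n (by omega)]
      have := fG (-1) le_rfl true L le_rfl (L-1) (by omega)
      have e : (((L-1:ℕ):ℝ)+1) = L := by
        have : ((L-1+1:ℕ):ℝ) = L := by congr 1; omega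
        rw [← this]; push_cast; ring
      simp only [e, div_self hLp.ne'] at this
      exact this
    have hχ : |χ L n| ≤ K3 := by
      rw [h.χ_def n (by omega)]
      exact (hX _ (abs_le.mp hf)).trans (le_max_right _ _)
    obtain ⟨gG, gC⟩ := hK4 T L _ _ _ _ (h.bview hL) hL (by omega) hχ
      (fun s hs r hr b i hi m hm => (bG s hs r hr true (!b) (L-i) (by omega) (L-1-m) (by omega)).trans h03)
      (fun s hs r hr b i hi m hm => (bG s hs r hr false (!b) (L-i) (by omega) (L-1-m) (by omega)).trans h03)
      (fun t s h1 h2 h3 h4 b m hm => (bC t s h1 h2 h3 h4 (!b) (L-1-m) (by omega)).trans h03)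
    have newC : ∀ s : ℤ, -1 ≤ s → s ≤ n → ∀ b, ∀ m < L, |C L n s b (((m:ℝ)+1)/L)| ≤ K4 := by
      intro s hs hsn b m hm
      cases b with
      | false => exact (fC s hs hsn m hm).trans (h23.trans h34)
      | true =>
        have := gC s hs hsn (L-1-m) (by omega)
        have e : L - 1 - (L - 1 - m) = m := by omega
        simp only [e, Bool.not_false] at this
        exact this
    refine ⟨?_, ?_⟩
    · intro s hs r hr a b i hi m hm
      rcases Nat.lt_succ_iff_lt_or_eq.mp hs with h' | h'
      · exact (bG s h' r hr a b i hi m hm).trans h04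
      · subst h'
        cases a with
        | false => exact (fG r hr b i hi m hm).trans (h23.trans h34)
        | true =>
          have := gG r hr (!b) (L-i) (by omega) (L-1-m) (by omega)
          have e : L - 1 - (L - 1 - m) = m := by omega
          have e' : L - (L - i) = i := by omega
          simp only [e, e', Bool.not_not] at this
          exact this
    · intro t s h1 h2 h3 h4 b m hm
      by_cases h5 : t = n
      · subst h5; exact newC s h2 (by omega) b m hm
      · by_cases h6 : s = n
        · subst h6; rw [h.C_symm]; exact newC t h1 (by omega) b m hm
        · exact (bC t s h1 h2 (by omega) (by omega) b m hm).trans h04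

/-- Uniform Lipschitzness in the layer variable along the grid
`{0, 1/L, …, 1}`: `|Γ^L(p,q) − Γ^L(p',q)| ≤ c·|p − p'|` and
`|C^L(p) − C^L(p')| ≤ c·|p − p'|`, uniformly in `L = 2^k`, `k ≥ k₀`. -/
theorem stmt_12
    (T : ℕ) (hT : 1 ≤ T) (ξ : ℕ → ℝ) (ℓ : ℕ → ℝ → ℝ) (ℓ' : ℕ → ℝ → ℝ)
    (hderiv : ∀ (t : ℕ) (x : ℝ), HasDerivAt (ℓ t) (ℓ' t x) x)
    (hlip : ∀ t : ℕ, LocallyLipschitz (ℓ' t))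
    (Γ : ℕ → ℕ → ℤ → Bool → Bool → ℝ → ℝ → ℝ)
    (C : ℕ → ℤ → ℤ → Bool → ℝ → ℝ)
    (f χ : ℕ → ℕ → ℝ)
    (hTP : ∀ L : ℕ, 1 ≤ L → IsLinearTP T L ξ ℓ' (Γ L) (C L) (f L) (χ L)) :
    ∃ c : ℝ, 0 < c ∧ ∃ k₀ : ℕ, ∀ k : ℕ, k₀ ≤ k →
      ∀ t : ℕ, t < T → ∀ r : ℤ, -1 ≤ r → r < (t : ℤ) → ∀ a b : Bool,
        ∀ q : ℝ, 0 < q → q ≤ 1 →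
          ∀ i j : ℕ, i ≤ 2 ^ k → j ≤ 2 ^ k →
            |Γ (2 ^ k) t r a b ((i : ℝ) / (2 : ℝ) ^ k) q -
                Γ (2 ^ k) t r a b ((j : ℝ) / (2 : ℝ) ^ k) q| ≤
              c * |(i : ℝ) / (2 : ℝ) ^ k - (j : ℝ) / (2 : ℝ) ^ k| ∧
            (1 ≤ i → 1 ≤ j →
              |C (2 ^ k) (t : ℤ) r a ((i : ℝ) / (2 : ℝ) ^ k) -
                  C (2 ^ k) (t : ℤ) r a ((j : ℝ) / (2 : ℝ) ^ k)| ≤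
                c * |(i : ℝ) / (2 : ℝ) ^ k - (j : ℝ) / (2 : ℝ) ^ k|) := by
  obtain ⟨K, hK, hB⟩ := TP_bounds T ξ ℓ' (fun t => (hlip t).continuous) Γ C f χ hTP T le_rfl
  set c1 : ℝ := T * (K * (2 * K)) with hc1
  set c2 : ℝ := 2 * ((T:ℝ)+2)^2 * (2 * K^2 * (T * (K * (2 * K)) + 1)) with hc2
  have hc1' : 0 ≤ c1 := by positivity
  have hc2' : 0 < c2 := by positivity
  refine ⟨c1 + c2, by positivity, 0, fun k _ t ht r hr hrt a b q hq0 hq1 i j hi hj => ?_⟩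
  have hL : 1 ≤ 2 ^ k := Nat.one_le_two_pow
  have hcast : ((2:ℝ) ^ k) = ((2 ^ k : ℕ) : ℝ) := by push_cast; rfl
  rw [hcast]
  generalize 2 ^ k = L at *
  have hLp : (0:ℝ) < L := by exact_mod_cast hL
  have h := hTP L hL
  obtain ⟨bG, bC⟩ := hB L hL
  have lf := (h.fview hL).lip hL K hK (fun s hs r hr b i hi m hm => bG s hs r hr false b i hi m hm)
    (fun s hs r hr b i hi m hm => bG s hs r hr true b i hi m hm)
    (fun t s h1 h2 h3 h4 b m hm => bC t s h1 h2 h3 h4 b m hm) t ht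
  have lb := (h.bview hL).lip hL K hK
    (fun s hs r hr b i hi m hm => bG s hs r hr true (!b) (L-i) (by omega) (L-1-m) (by omega))
    (fun s hs r hr b i hi m hm => bG s hs r hr false (!b) (L-i) (by omega) (L-1-m) (by omega))
    (fun t s h1 h2 h3 h4 b m hm => bC t s h1 h2 h3 h4 (!b) (L-1-m) (by omega)) t ht
  constructor
  · obtain ⟨m, hm, hm1, hm2⟩ : ∃ m < L, (m:ℝ)/L < q ∧ q ≤ ((m:ℝ)+1)/L := by
      have hpos : 0 < ⌈(L:ℝ)*q⌉₊ := Nat.ceil_pos.mpr (by positivity)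
      have hle : ⌈(L:ℝ)*q⌉₊ ≤ L := Nat.ceil_le.mpr (by nlinarith)
      refine ⟨⌈(L:ℝ)*q⌉₊ - 1, by omega, ?_, ?_⟩
      · rw [div_lt_iff₀ hLp, mul_comm q]
        exact Nat.lt_ceil.mp (by omega)
      · rw [le_div_iff₀ hLp, mul_comm q]
        have := Nat.le_ceil ((L:ℝ)*q)
        have e : ((⌈(L:ℝ)*q⌉₊ - 1 : ℕ):ℝ) + 1 = ⌈(L:ℝ)*q⌉₊ := by
          have : ⌈(L:ℝ)*q⌉₊ - 1 + 1 = ⌈(L:ℝ)*q⌉₊ := by omega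
          exact_mod_cast this
        rw [e]; exact this
    rw [h.qconst hL m hm q hm1 hm2 t ht r hr a b i hi, h.qconst hL m hm q hm1 hm2 t ht r hr a b j hj]
    have main : |Γ L t r a b ((i:ℝ)/L) (((m:ℝ)+1)/L) - Γ L t r a b ((j:ℝ)/L) (((m:ℝ)+1)/L)|
        ≤ c1 * |(i:ℝ)/L - (j:ℝ)/L| := by
      refine grid_lip L (fun i => Γ L t r a b ((i:ℝ)/L) (((m:ℝ)+1)/L)) c1 L ?_ i j hi hj
      intro i hi
      cases a with
      | false => exact lf.1 r hr hrt b m hm i hi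
      | true =>
        have := lb.1 r hr hrt (!b) (L-1-m) (by omega) (L-1-i) (by omega)
        have e1 : L - 1 - (L - 1 - m) = m := by omega
        have e2 : L - (L - 1 - i + 1) = i := by omega
        have e3 : L - (L - 1 - i) = i + 1 := by omega
        simp only [e1, e2, e3, Bool.not_not] at this
        rw [abs_sub_comm]
        exact this
    refine main.trans ?_
    gcongr
    linarith
  · intro hi1 hj1
    obtain ⟨i, rfl⟩ := Nat.exists_eq_add_of_le' hi1
    obtain ⟨j, rfl⟩ := Nat.exists_eq_add_of_le' hj1
    rcases hr.lt_or_eq with hr | hr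
    · lift r to ℕ using (by omega)
      have main : |C L t r a (((i:ℝ)+1)/L) - C L t r a (((j:ℝ)+1)/L)|
          ≤ c2 * |(i:ℝ)/L - (j:ℝ)/L| := by
        refine grid_lip L (fun i => C L t r a (((i:ℝ)+1)/L)) c2 (L-1) ?_ i j (by omega) (by omega)
        intro i hi
        cases a with
        | false => exact lf.2 r (by omega) i (by omega)
        | true =>
          have := lb.2 r (by omega) (L-1-(i+1)) (by omega)
          have e1 : L - 1 - (L - 1 - (i+1) + 1) = i := by omega
          have e2 : L - 1 - (L - 1 - (i + 1)) = i + 1 := by omega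
          simp only [e1, e2, Bool.not_false] at this
          rw [abs_sub_comm]
          exact this
      have e : ((i+1:ℕ):ℝ)/L - ((j+1:ℕ):ℝ)/L = (i:ℝ)/L - (j:ℝ)/L := by push_cast; ring
      rw [e]
      push_cast
      refine main.trans ?_
      gcongr
      linarith
    · rw [← hr, h.C_mixed t (by omega), h.C_mixed t (by omega)]
      simp only [sub_self, abs_zero]
      positivity
end
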